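/- arXiv:1901.08056 — 3 statements merged into one kernel-verified Lean document; each statement's English description precedes it below -/
import Mathlib

section
/- Let V be a von Neumann algebra on a complex Hilbert space H, let (p_n) be an increasing sequence of projections in V (p_n ≤ p_{n+1} for all n) with supremum p, and let q be a projection in V such that p_n ~ q for every n ∈ ℕ. Then p ~ q. -/
/-!
Write `d n = p (n+1) - p n`, so that `p = p 0 + ∑ d n` in the strong operator topology. Since
`p n ~ q ~ p (n+1)`, the algebra `qVq` contains an isometry `v n` whose range has a complement
in `q` that is equivalent to `d n`. Multiplying the `v n` along a sequence which visits every
index `n` infinitely often (`exists_copies`) produces pairwise orthogonal projections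
`a (n, j) ≤ q` with `a (n, j) ~ d n` for all `n` and `j`. Infinitely many copies of each `d n`
leave room for one more: the shift `a (n, j) ↦ a (n, j+1)` gives `q ~ q - ∑ a (n, 0)`, whereas
`∑ a (n, 0) ~ ∑ d n = p - p 0`. Adding `q - ∑ a (n, 0) ~ q ~ p 0` to this yields `q ~ p`.
Neither a central decomposition nor a Schröder–Bernstein argument is needed.

The analytic input is `exists_sum`: a family of partial isometries in `V` with pairwise orthogonal
initial and pairwise orthogonal final projections sums strongly to an element of `V`.
-/


noncomputable section

variable {H : Type*} [NormedAddCommGroup H] [InnerProductSpace ℂ H] [CompleteSpace H]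

/-- A projection in a von Neumann algebra `V`: a self-adjoint idempotent element of `V`. -/
def VonNeumannAlgebra.IsProjIn (V : VonNeumannAlgebra H) (p : H →L[ℂ] H) : Prop :=
  p ∈ V ∧ star p = p ∧ p * p = p

/-- Murray–von Neumann equivalence of `p` and `q` in `V`: there is `u ∈ V` with
`u*u = p` and `uu* = q`. -/
def VonNeumannAlgebra.MvNEquiv (V : VonNeumannAlgebra H) (p q : H →L[ℂ] H) : Prop :=
  ∃ u ∈ V, star u * u = p ∧ u * star u = q

/-- `p` is a σ-finite projection in `V`: every family of pairwise orthogonal nonzero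
projections of `V` below `p` is countable. (For projections, `q ≤ p` means `qp = q`.) -/
def VonNeumannAlgebra.SigmaFiniteProj (V : VonNeumannAlgebra H) (p : H →L[ℂ] H) : Prop :=
  ∀ S : Set (H →L[ℂ] H), (∀ e ∈ S, V.IsProjIn e) → (∀ e ∈ S, e ≠ 0) →
    (∀ e ∈ S, ∀ f ∈ S, e ≠ f → e * f = 0) → (∀ e ∈ S, e * p = e) → S.Countable

/-- `p` is a finite projection in `V`: every projection `q ∈ V` with `q ≤ p` and `q ~ p`
equals `p`. -/
def VonNeumannAlgebra.FiniteProj (V : VonNeumannAlgebra H) (p : H →L[ℂ] H) : Prop :=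
  V.IsProjIn p ∧ ∀ q, V.IsProjIn q → q * p = q → V.MvNEquiv q p → q = p

/-- A central projection of `V`: a projection of `V` commuting with every element of `V`. -/
def VonNeumannAlgebra.CentralProj (V : VonNeumannAlgebra H) (z : H →L[ℂ] H) : Prop :=
  V.IsProjIn z ∧ ∀ v ∈ V, z * v = v * z

/-- `p` is properly infinite in `V`: `zp` is infinite (i.e., not finite) for every central
projection `z` of `V` with `zp ≠ 0`. -/
def VonNeumannAlgebra.ProperlyInfiniteProj (V : VonNeumannAlgebra H) (p : H →L[ℂ] H) : Prop :=
  V.IsProjIn p ∧ ∀ z, V.CentralProj z → z * p ≠ 0 → ¬ V.FiniteProj (z * p)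

open Filter Topology

namespace Stmt11

set_option linter.unusedSectionVars false

/-! ### Strong sums of operators -/

/-- The family `e` sums unconditionally to `E` in the strong operator topology. -/
def SOTSum {ι : Type*} (e : ι → (H →L[ℂ] H)) (E : H →L[ℂ] H) : Prop :=
  ∀ x, HasSum (fun i => e i x) (E x)

theorem SOTSum.unique {ι : Type*} {e : ι → (H →L[ℂ] H)} {E F : H →L[ℂ] H}
    (hE : SOTSum e E) (hF : SOTSum e F) : E = F := by
  ext x
  exact (hE x).unique (hF x)

theorem SOTSum.mul_right {ι : Type*} {e : ι → (H →L[ℂ] H)} {E : H →L[ℂ] H}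
    (hE : SOTSum e E) (B : H →L[ℂ] H) : SOTSum (fun i => e i * B) (E * B) :=
  fun x => hE (B x)

theorem SOTSum.mul_left {ι : Type*} {e : ι → (H →L[ℂ] H)} {E : H →L[ℂ] H}
    (hE : SOTSum e E) (B : H →L[ℂ] H) : SOTSum (fun i => B * e i) (B * E) :=
  fun x => B.hasSum (hE x)

theorem sotSum_zero {ι : Type*} : SOTSum (fun _ : ι => (0 : H →L[ℂ] H)) 0 :=
  fun _ => hasSum_zero

theorem sotSum_single {ι : Type*} {e : ι → (H →L[ℂ] H)} (i : ι) (h : ∀ j, j ≠ i → e j = 0) :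
    SOTSum e (e i) := by
  intro x
  refine hasSum_single i fun j hj => ?_
  simp [h j hj]

theorem SOTSum.mem {ι : Type*} {V : VonNeumannAlgebra H} {e : ι → (H →L[ℂ] H)} {E : H →L[ℂ] H}
    (hE : SOTSum e E) (he : ∀ i, e i ∈ V) : E ∈ V := by
  rw [← V.commutant_commutant, VonNeumannAlgebra.mem_commutant_iff]
  intro g hg
  rw [VonNeumannAlgebra.mem_commutant_iff] at hg
  refine (hE.mul_left g).unique ?_
  have := hE.mul_right g
  simpa only [hg _ (he _)] using this

theorem SOTSum.star_eq {ι : Type*} {e : ι → (H →L[ℂ] H)} {E F : H →L[ℂ] H}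
    (hE : SOTSum e E) (hF : SOTSum (fun i => star (e i)) F) : star E = F := by
  symm
  rw [ContinuousLinearMap.star_eq_adjoint, ContinuousLinearMap.eq_adjoint_iff]
  intro x y
  have h1 : HasSum (fun i => inner ℂ ((star (e i)) x) y) (inner ℂ (F x) y) := by
    simpa using (hF x).mapL ((innerSL ℂ).flip y)
  have h2 : HasSum (fun i => inner ℂ x (e i y)) (inner ℂ x (E y)) := by
    simpa using (hE y).mapL (innerSL ℂ x)
  refine h1.unique ?_
  simpa [ContinuousLinearMap.star_eq_adjoint, ContinuousLinearMap.adjoint_inner_left] using h2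

/-- A partial isometry is a contraction, by the C*-identity. -/
theorem norm_apply_le_of_star_mul_self {u e : H →L[ℂ] H} (h : star u * u = e) (he : e * e = e)
    (x : H) : ‖u x‖ ≤ ‖x‖ := by
  have hs : star e = e := by rw [← h]; simp
  have h1 : ‖e‖ = ‖e‖ * ‖e‖ := by
    conv_lhs => rw [← he]
    conv_lhs => enter [1, 1]; rw [← hs]
    exact CStarRing.norm_star_mul_self
  have h2 : ‖u‖ * ‖u‖ = ‖e‖ := by rw [← CStarRing.norm_star_mul_self, h]
  have h4 : ‖e‖ ≤ 1 := by
    by_contra! h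
    nlinarith
  have h3 : ‖u‖ ≤ 1 := by
    by_contra! h
    nlinarith
  exact (u.le_opNorm x).trans (by nlinarith [norm_nonneg x])

section
variable {ι : Type*} {u : ι → (H →L[ℂ] H)}

theorem sum_star_mul_sum (h0 : ∀ i j, i ≠ j → star (u i) * u j = 0) (s : Finset ι) :
    star (∑ i ∈ s, u i) * (∑ i ∈ s, u i) = ∑ i ∈ s, star (u i) * u i := by
  classical
  rw [star_sum, Finset.sum_mul]
  refine Finset.sum_congr rfl fun i hi => ?_
  rw [Finset.mul_sum]
  exact Finset.sum_eq_single i (fun j _ hj => h0 i j hj.symm) (fun h => absurd hi h)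

/-- The partial sums are partial isometries, hence contractions. -/
theorem norm_sum_apply_le (h0 : ∀ i j, i ≠ j → star (u i) * u j = 0)
    (h1 : ∀ i j, i ≠ j → u i * star (u j) = 0) (h2 : ∀ i, u i * star (u i) * u i = u i)
    (s : Finset ι) (x : H) : ‖∑ i ∈ s, u i x‖ ≤ ‖x‖ := by
  classical
  have := norm_apply_le_of_star_mul_self (sum_star_mul_sum h0 s) (by
    rw [Finset.sum_mul]
    refine Finset.sum_congr rfl fun i hi => ?_
    rw [Finset.mul_sum, Finset.sum_eq_single i]
    · rw [mul_assoc, ← mul_assoc (u i), h2]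
    · intro j _ hj
      rw [mul_assoc, ← mul_assoc (u i), h1 i j hj.symm]; simp
    · exact fun h => absurd hi h) x
  simpa using this

theorem summable_apply (h0 : ∀ i j, i ≠ j → star (u i) * u j = 0)
    (h1 : ∀ i j, i ≠ j → u i * star (u j) = 0) (h2 : ∀ i, u i * star (u i) * u i = u i)
    (x : H) : Summable fun i => u i x := by
  have hO : OrthogonalFamily ℂ (fun i => (LinearMap.range (u i).toLinearMap))
      fun i => (LinearMap.range (u i).toLinearMap).subtypeₗᵢ := by
    rintro i j hij ⟨_, a, rfl⟩ ⟨_, b, rfl⟩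
    have := congrArg (fun T : H →L[ℂ] H => inner ℂ a (T b)) (h0 i j hij)
    simpa [ContinuousLinearMap.star_eq_adjoint, ContinuousLinearMap.adjoint_inner_right] using this
  let f : ∀ i, LinearMap.range (u i).toLinearMap := fun i => ⟨u i x, x, rfl⟩
  refine (hO.summable_iff_norm_sq_summable f).2 ?_
  refine summable_of_sum_le (c := ‖x‖ ^ 2) (fun i => by positivity) fun s => ?_
  rw [← hO.norm_sum f s]
  have := norm_sum_apply_le h0 h1 h2 s x
  exact pow_le_pow_left₀ (norm_nonneg _) this 2

theorem exists_sotSum (h0 : ∀ i j, i ≠ j → star (u i) * u j = 0)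
    (h1 : ∀ i j, i ≠ j → u i * star (u j) = 0) (h2 : ∀ i, u i * star (u i) * u i = u i) :
    ∃ U, SOTSum u U := by
  have hs := summable_apply h0 h1 h2
  let L : H →ₗ[ℂ] H :=
    { toFun := fun x => ∑' i, u i x
      map_add' := fun x y => by simp only [map_add]; exact (hs x).tsum_add (hs y)
      map_smul' := fun c x => by
        simp only [map_smul, RingHom.id_apply]; exact (hs x).tsum_const_smul c }
  refine ⟨L.mkContinuous 1 fun x => ?_, fun x => (hs x).hasSum⟩
  rw [one_mul]
  exact le_of_tendsto (hs x).hasSum.norm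
    (Eventually.of_forall fun s => norm_sum_apply_le h0 h1 h2 s x)

/-- Orthogonal partial isometries in `V` can be added, and so can their initial and final
projections. -/
theorem exists_sum {V : VonNeumannAlgebra H} (hV : ∀ i, u i ∈ V)
    (h0 : ∀ i j, i ≠ j → star (u i) * u j = 0)
    (h1 : ∀ i j, i ≠ j → u i * star (u j) = 0) (h2 : ∀ i, u i * star (u i) * u i = u i) :
    ∃ U ∈ V, SOTSum (fun i => star (u i) * u i) (star U * U) ∧
      SOTSum (fun i => u i * star (u i)) (U * star U) := by
  obtain ⟨U, hU⟩ := exists_sotSum h0 h1 h2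
  obtain ⟨W, hW⟩ := exists_sotSum (u := fun i => star (u i))
    (by simpa using h1) (by simpa using h0)
    (fun i => by simpa [mul_assoc] using congrArg star (h2 i))
  obtain rfl := hU.star_eq hW
  refine ⟨U, hU.mem hV, ?_, ?_⟩
  · have key : ∀ i, star (u i) * U = star (u i) * u i := fun i =>
      (hU.mul_left (star (u i))).unique (sotSum_single i fun j hj => h0 i j hj.symm)
    simpa only [key] using hW.mul_right U
  · have key : ∀ i, u i * star U = u i * star (u i) := fun i =>
      (hW.mul_left (u i)).unique (sotSum_single i fun j hj => h1 i j hj.symm)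
    simpa only [key] using hU.mul_right (star U)

end

/-! ### Murray–von Neumann equivalence -/

theorem mul_initial {u e : H →L[ℂ] H} (h : star u * u = e) (he : e * e = e) : u * e = u := by
  have hs : star e = e := by rw [← h]; simp
  have : star (u * e - u) * (u * e - u) = 0 := by
    simp only [star_sub, star_mul, hs, sub_mul, mul_sub]
    simp only [mul_assoc, ← mul_assoc (star u) u, h, he, sub_self]
  exact sub_eq_zero.1 ((CStarRing.star_mul_self_eq_zero_iff _).1 this)

theorem final_mul {u f : H →L[ℂ] H} (h : u * star u = f) (hf : f * f = f) : f * u = u := by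
  have hs : star f = f := by rw [← h]; simp
  have := congrArg star (mul_initial (u := star u) (by simpa using h) hf)
  simpa [hs] using this

variable {V : VonNeumannAlgebra H}

theorem mvn_symm {e f : H →L[ℂ] H} (h : V.MvNEquiv e f) : V.MvNEquiv f e := by
  obtain ⟨u, hu, h1, h2⟩ := h
  exact ⟨star u, star_mem hu, by simpa using h2, by simpa using h1⟩

theorem mvn_refl {e : H →L[ℂ] H} (h : V.IsProjIn e) : V.MvNEquiv e e :=
  ⟨e, h.1, by rw [h.2.1, h.2.2], by rw [h.2.1, h.2.2]⟩

theorem mvn_trans {e f g : H →L[ℂ] H} (he : e * e = e) (hg : g * g = g)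
    (h : V.MvNEquiv e f) (h' : V.MvNEquiv f g) : V.MvNEquiv e g := by
  obtain ⟨u, hu, h1, h2⟩ := h
  obtain ⟨w, hw, h3, h4⟩ := h'
  refine ⟨w * u, mul_mem hw hu, ?_, ?_⟩
  · rw [star_mul, mul_assoc, ← mul_assoc (star w), h3, ← h2, mul_assoc u, h1,
      mul_initial h1 he, h1]
  · rw [star_mul, mul_assoc, ← mul_assoc u, h2, ← h3, mul_assoc (star w), h4]
    simp only [← mul_assoc, h4, hg]

theorem mvn_add {e f e' f' : H →L[ℂ] H} (he : e * e = e) (hf : f * f = f)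
    (he' : e' * e' = e') (hf' : f' * f' = f') (hee : e * e' = 0) (hff : f * f' = 0)
    (h : V.MvNEquiv e f) (h' : V.MvNEquiv e' f') : V.MvNEquiv (e + e') (f + f') := by
  obtain ⟨u, hu, h1, h2⟩ := h
  obtain ⟨w, hw, h3, h4⟩ := h'
  have hf_star : star f = f := by rw [← h2]; simp
  have he'_star : star e' = e' := by rw [← h3]; simp
  have k1 : star u * w = 0 := by
    have : star u * f = star u := by
      simpa [hf_star] using congrArg star (final_mul h2 hf)
    rw [← this, ← final_mul h4 hf', mul_assoc, ← mul_assoc f, hff]; simp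
  have k2 : u * star w = 0 := by
    have : e' * star w = star w := by
      simpa [he'_star] using congrArg star (mul_initial h3 he')
    rw [← this, ← mul_initial h1 he, mul_assoc, ← mul_assoc e, hee]; simp
  have k3 : star w * u = 0 := by simpa using congrArg star k1
  have k4 : w * star u = 0 := by simpa using congrArg star k2
  refine ⟨u + w, add_mem hu hw, ?_, ?_⟩
  · simp only [star_add, add_mul, mul_add, h1, h3, k1, k3]; abel
  · simp only [star_add, add_mul, mul_add, h2, h4, k2, k4]; abel

/-! ### Orthogonal copies of the complements of isometries -/

/-- The product `v 0 * ⋯ * v (k-1)`, started at `q`. -/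
def prodV (q : H →L[ℂ] H) (v : ℕ → (H →L[ℂ] H)) : ℕ → (H →L[ℂ] H)
  | 0 => q
  | k + 1 => prodV q v k * v k

/-- Let `v k` be isometries of `q` and `s k` partial isometries with initial projection `d k`
and final projection in `q`, orthogonal to the range of `v k`. Then `v 0 * ⋯ * v (k-1) * s k` has
initial projection `d k`, and the ranges of these operators are pairwise orthogonal in `q`. -/
theorem exists_copies {q : H →L[ℂ] H} (hq : V.IsProjIn q) {v s d : ℕ → (H →L[ℂ] H)}
    (hvV : ∀ k, v k ∈ V) (hsV : ∀ k, s k ∈ V)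
    (hv : ∀ k, star (v k) * v k = q) (hqv : ∀ k, q * v k = v k)
    (hs : ∀ k, star (s k) * s k = d k) (hqs : ∀ k, q * s k = s k)
    (hsv : ∀ k, star (s k) * v k = 0) :
    ∃ t : ℕ → (H →L[ℂ] H), (∀ k, t k ∈ V) ∧ (∀ k, star (t k) * t k = d k) ∧
      (∀ k, q * t k = t k) ∧ ∀ k l, k ≠ l → star (t k) * t l = 0 := by
  obtain ⟨hqV, hqs', hqq⟩ := hq
  have hPV : ∀ k, prodV q v k ∈ V := fun k => by
    induction k with
    | zero => exact hqV
    | succ k ih => exact mul_mem ih (hvV k)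
  have hqP : ∀ k, q * prodV q v k = prodV q v k := fun k => by
    induction k with
    | zero => exact hqq
    | succ k ih => rw [prodV, ← mul_assoc, ih]
  have hP : ∀ k, star (prodV q v k) * prodV q v k = q := fun k => by
    induction k with
    | zero => rw [prodV, hqs', hqq]
    | succ k ih =>
      rw [prodV, star_mul, mul_assoc, ← mul_assoc (star (prodV q v k)), ih, hqv, hv]
  have key : ∀ k l, k + 1 ≤ l → star (prodV q v k * s k) * prodV q v l = 0 := by
    intro k l hl
    induction l, hl using Nat.le_induction with
    | base =>
      rw [prodV, star_mul, mul_assoc, ← mul_assoc (star (prodV q v k)), hP, hqv, hsv]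
    | succ l _ ih => rw [prodV, ← mul_assoc, ih, zero_mul]
  have key2 : ∀ k l, k < l → star (prodV q v k * s k) * (prodV q v l * s l) = 0 := by
    intro k l hl
    rw [← mul_assoc, key k l hl, zero_mul]
  refine ⟨fun k => prodV q v k * s k, fun k => mul_mem (hPV k) (hsV k), fun k => ?_, fun k => ?_,
    fun k l hkl => ?_⟩
  · rw [star_mul, mul_assoc, ← mul_assoc (star (prodV q v k)), hP, hqs, hs]
  · rw [← mul_assoc, hqP]
  · rcases lt_or_gt_of_ne hkl with h | h
    · exact key2 k l h
    · simpa only [star_mul, star_star, star_zero] using congrArg star (key2 l k h)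

/-! ### Absorbing one copy of each difference -/

/-- `ℕ × ℕ` is the disjoint union of its first column and the shifted `ℕ × ℕ`. -/
def colEquiv : ℕ ⊕ ℕ × ℕ ≃ ℕ × ℕ where
  toFun := Sum.elim (fun n => (n, 0)) (fun x => (x.1, x.2 + 1))
  invFun := fun x => match x with
    | (n, 0) => Sum.inl n
    | (n, j + 1) => Sum.inr (n, j)
  left_inv := by rintro (n | ⟨n, j⟩) <;> rfl
  right_inv := by rintro ⟨n, _ | j⟩ <;> rfl

/-- If `q` contains orthogonal copies `a (n, j)`, `j ∈ ℕ`, of each of the orthogonal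
projections `d n`, then `q` is the sum of a projection equivalent to `q` and one equivalent
to `∑ d n`. -/
theorem absorb {q : H →L[ℂ] H} (hq : V.IsProjIn q) {d : ℕ → (H →L[ℂ] H)}
    (hd : ∀ n, V.IsProjIn (d n)) (hdd : ∀ n m, n ≠ m → d n * d m = 0)
    {t : ℕ × ℕ → (H →L[ℂ] H)} (htV : ∀ i, t i ∈ V) (ht : ∀ i, star (t i) * t i = d i.1)
    (hqt : ∀ i, q * t i = t i) (htt : ∀ i j, i ≠ j → star (t i) * t j = 0) :
    ∃ D A, V.IsProjIn D ∧ SOTSum d D ∧ V.IsProjIn A ∧ q * A = A ∧ V.MvNEquiv D A ∧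
      V.MvNEquiv q (q - A) := by
  have htd : ∀ i, t i * d i.1 = t i := fun i => mul_initial (ht i) (hd i.1).2.2
  have hdt : ∀ i, d i.1 * star (t i) = star (t i) := fun i => by
    simpa [(hd i.1).2.1] using congrArg star (htd i)
  set a : ℕ × ℕ → (H →L[ℂ] H) := fun i => t i * star (t i) with ha
  have haa : ∀ i j, i ≠ j → a i * a j = 0 := fun i j hij => by
    simp only [ha]
    rw [mul_assoc, ← mul_assoc (star (t i)), htt i j hij]; simp
  have ha1 : ∀ i, a i * a i = a i := fun i => by
    simp only [ha]
    rw [mul_assoc, ← mul_assoc (star (t i)), ht, hdt]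
  obtain ⟨U, hUV, hU1, hU2⟩ := exists_sum (V := V) (u := fun n : ℕ => t (n, 0)) (fun n => htV _)
    (fun n m h => htt _ _ (by simpa using h))
    (fun n m h => by
      rw [← htd (n, 0), ← hdt (m, 0), mul_assoc, ← mul_assoc (d _), hdd n m h]; simp)
    (fun n => by rw [mul_assoc, ht, htd])
  obtain ⟨W, hWV, hW1, hW2⟩ := exists_sum (V := V)
    (u := fun i : ℕ × ℕ => t (i.1, i.2 + 1) * star (t i))
    (fun i => mul_mem (htV _) (star_mem (htV _)))
    (fun i j h => by
      have : star (t (i.1, i.2 + 1)) * t (j.1, j.2 + 1) = 0 :=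
        htt _ _ fun e => h (by simpa [Prod.ext_iff] using e)
      rw [star_mul, star_star, mul_assoc, ← mul_assoc (star (t (i.1, i.2 + 1))), this]; simp)
    (fun i j h => by
      rw [star_mul, star_star, mul_assoc, ← mul_assoc (star (t i)), htt i j h]; simp)
    (fun i => by
      simp only [star_mul, star_star, mul_assoc]
      rw [← mul_assoc (star (t (i.1, i.2 + 1))), ht, ← mul_assoc (star (t i)) (t i), ht,
        hdt i, hdt i])
  have e1 : ∀ i : ℕ × ℕ, star (t (i.1, i.2 + 1) * star (t i)) * (t (i.1, i.2 + 1) * star (t i))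
      = a i := fun i => by
    rw [star_mul, star_star, mul_assoc, ← mul_assoc (star (t (i.1, i.2 + 1))), ht, hdt i]
  have e2 : ∀ i : ℕ × ℕ, (t (i.1, i.2 + 1) * star (t i)) * star (t (i.1, i.2 + 1) * star (t i))
      = a (i.1, i.2 + 1) := fun i => by
    rw [star_mul, star_star, mul_assoc, ← mul_assoc (star (t i)), ht i, hdt (i.1, i.2 + 1)]
  simp only [e1, e2, ht] at hW1 hW2 hU1
  change SOTSum (fun n => a (n, 0)) _ at hU2
  set A := U * star U with hA
  set B := star W * W with hB
  set C := W * star W with hC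
  have hBAC : B = A + C := hW1.unique fun x => by
    rw [← colEquiv.hasSum_iff]
    exact HasSum.sum (f := (fun i => a i x) ∘ colEquiv) (hU2 x) (hW2 x)
  have hAV : A ∈ V := mul_mem hUV (star_mem hUV)
  have hCV : C ∈ V := mul_mem hWV (star_mem hWV)
  have hAs : star A = A := by simp [hA]
  have hCs : star C = C := by simp [hC]
  have hAA : A * A = A := (hU2.mul_right A).unique <| by
    have : ∀ n, a (n, 0) * A = a (n, 0) := fun n => (hU2.mul_left _).unique <| by
      have := sotSum_single (e := fun m : ℕ => a (n, 0) * a (m, 0)) n fun m hm =>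
        haa _ _ (by simpa using hm.symm)
      simpa only [ha1] using this
    simpa only [this] using hU2
  have hCC : C * C = C := (hW2.mul_right C).unique <| by
    have : ∀ i : ℕ × ℕ, a (i.1, i.2 + 1) * C = a (i.1, i.2 + 1) := fun i =>
      (hW2.mul_left _).unique <| by
      have := sotSum_single (e := fun j : ℕ × ℕ => a (i.1, i.2 + 1) * a (j.1, j.2 + 1)) i
        fun j hj => haa _ _ fun e => hj (by simpa [Prod.ext_iff, eq_comm] using e)
      simpa only [ha1] using this
    simpa only [this] using hW2
  have hAC : A * C = 0 := (hU2.mul_right C).unique <| by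
    have : ∀ n, a (n, 0) * C = 0 := fun n => (hW2.mul_left _).unique <| by
      have : ∀ j : ℕ × ℕ, a (n, 0) * a (j.1, j.2 + 1) = 0 := fun j => haa _ _ (by simp)
      simpa only [this] using sotSum_zero
    simpa only [this] using sotSum_zero
  have hCA : C * A = 0 := by simpa [hAs, hCs] using congrArg star hAC
  have hqa : ∀ i, q * a i = a i := fun i => by simp only [ha]; rw [← mul_assoc, hqt]
  have hqA : q * A = A := (hU2.mul_left q).unique <| by simpa only [hqa] using hU2
  have hqC : q * C = C := (hW2.mul_left q).unique <| by simpa only [hqa] using hW2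
  have hAq : A * q = A := by simpa [hAs, hq.2.1] using congrArg star hqA
  have hCq : C * q = C := by simpa [hCs, hq.2.1] using congrArg star hqC
  have hDD : (star U * U) * (star U * U) = star U * U := by
    have hd' : ∀ n, d n * (star U * U) = d n := fun n => (hU1.mul_left _).unique <| by
      have := sotSum_single (e := fun m : ℕ => d n * d m) n fun m hm => hdd _ _ hm.symm
      simpa only [(hd n).2.2] using this
    exact (hU1.mul_right _).unique <| by simpa only [hd'] using hU1
  refine ⟨star U * U, A, ⟨mul_mem (star_mem hUV) hUV, by simp, hDD⟩, hU1, ⟨hAV, hAs, hAA⟩, hqA,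
    ⟨U, hUV, rfl, rfl⟩, ?_⟩
  have hR : V.IsProjIn (q - B) := by
    refine ⟨sub_mem hq.1 (mul_mem (star_mem hWV) hWV), ?_, ?_⟩
    · rw [hBAC]; simp [hAs, hCs, hq.2.1]
    · rw [hBAC]
      simp only [sub_mul, mul_sub, add_mul, mul_add, hq.2.2, hqA, hqC, hAq, hCq, hAA, hCC, hAC,
        hCA]
      abel
  have := mvn_add hR.2.2 hR.2.2
    (by rw [hBAC]; simp only [add_mul, mul_add, hAA, hCC, hAC, hCA]; abel : B * B = B) hCC
    (by rw [hBAC]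
        simp only [sub_mul, add_mul, mul_add, hqA, hqC, hAA, hCC, hAC, hCA]; abel)
    (by rw [hBAC]
        simp only [sub_mul, add_mul, hqC, hCC, hAC]; abel)
    (mvn_refl hR) (⟨W, hWV, rfl, rfl⟩ : V.MvNEquiv B C)
  convert this using 1
  · abel
  · rw [hBAC]; abel

end Stmt11

open Stmt11

/-- if `(p_n)` is an increasing sequence of projections in `V` with
supremum `p`, and every `p_n` is equivalent to a projection `q`, then `p ~ q`. -/
theorem stmt11 (V : VonNeumannAlgebra H) (pn : ℕ → (H →L[ℂ] H)) (p q : H →L[ℂ] H)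
    (hpn : ∀ n, V.IsProjIn (pn n))
    (hmono : ∀ n, pn n * pn (n + 1) = pn n)
    (hp : V.IsProjIn p) (hq : V.IsProjIn q)
    (hub : ∀ n, pn n * p = pn n)
    (hlub : ∀ r, V.IsProjIn r → (∀ n, pn n * r = pn n) → p * r = p)
    (hequiv : ∀ n, V.MvNEquiv (pn n) q) :
    V.MvNEquiv p q := by
  have hle : ∀ n m, n ≤ m → pn n * pn m = pn n := by
    intro n m h
    induction m, h using Nat.le_induction with
    | base => exact (hpn n).2.2
    | succ m _ ih => rw [← ih, mul_assoc, hmono]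
  have hge : ∀ n m, n ≤ m → pn m * pn n = pn n := fun n m h => by
    simpa [(hpn n).2.1, (hpn m).2.1] using congrArg star (hle n m h)
  choose w hwV hw1 hw2 using hequiv
  have hwp : ∀ n, w n * pn n = w n := fun n => mul_initial (hw1 n) (hpn n).2.2
  have hqw : ∀ n, q * w n = w n := fun n => final_mul (hw2 n) hq.2.2
  set d : ℕ → (H →L[ℂ] H) := fun n => pn (n + 1) - pn n with hd_def
  have hd : ∀ n, V.IsProjIn (d n) := fun n => by
    refine ⟨sub_mem (hpn _).1 (hpn _).1, by simp [hd_def, (hpn _).2.1], ?_⟩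
    simp only [hd_def, sub_mul, mul_sub, (hpn _).2.2, hmono, hge n (n + 1) n.le_succ]
    abel
  have hdd_lt : ∀ n m, n < m → d n * d m = 0 := fun n m h => by
    simp only [hd_def, sub_mul, mul_sub]
    rw [hle _ _ (by omega), hle _ _ (by omega), hle _ _ (by omega), hle _ _ (by omega)]
    abel
  have hdd : ∀ n m, n ≠ m → d n * d m = 0 := fun n m h => by
    rcases lt_or_gt_of_ne h with h | h
    · exact hdd_lt n m h
    · simpa [(hd _).2.1] using congrArg star (hdd_lt m n h)
  have hpd : ∀ n, pn (n + 1) * d n = d n := fun n => by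
    simp only [hd_def, mul_sub, (hpn _).2.2, hge n (n + 1) n.le_succ]
  have hdp : ∀ n, d n * pn n = 0 := fun n => by
    simp only [hd_def, sub_mul, (hpn _).2.2, hge n (n + 1) n.le_succ, sub_self]
  -- `k ↦ k.unpair.1` takes every value infinitely often.
  obtain ⟨t, htV, ht, hqt, htt⟩ := exists_copies (V := V) hq
    (v := fun k => w (k.unpair.1 + 1) * star (w k.unpair.1))
    (s := fun k => w (k.unpair.1 + 1) * d k.unpair.1) (d := fun k => d k.unpair.1)
    (fun k => mul_mem (hwV _) (star_mem (hwV _))) (fun k => mul_mem (hwV _) (hd _).1)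
    (fun k => by
      rw [star_mul, star_star, mul_assoc, ← mul_assoc (star (w (k.unpair.1 + 1))), hw1,
        ← mul_assoc, ← hwp k.unpair.1, mul_assoc (w _), hmono, hwp, hw2])
    (fun k => by rw [← mul_assoc, hqw])
    (fun k => by
      rw [star_mul, mul_assoc, ← mul_assoc (star (w _)), hw1, hpd, (hd _).2.1, (hd _).2.2])
    (fun k => by rw [← mul_assoc, hqw])
    (fun k => by
      have h1 : pn k.unpair.1 * star (w k.unpair.1) = star (w k.unpair.1) := by
        simpa [(hpn _).2.1] using congrArg star (hwp k.unpair.1)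
      have h2 : d k.unpair.1 * pn (k.unpair.1 + 1) = d k.unpair.1 := by
        simpa [(hpn _).2.1, (hd _).2.1] using congrArg star (hpd k.unpair.1)
      rw [star_mul, mul_assoc, ← mul_assoc (star (w _)), hw1, (hd _).2.1, ← mul_assoc, h2, ← h1,
        ← mul_assoc, hdp, zero_mul])
  obtain ⟨D, A, hD, hdD, hA, hqA, hDA, hqqA⟩ := absorb (V := V) hq hd hdd
    (t := fun i => t (Nat.pair i.1 i.2)) (fun i => htV _)
    (fun i => by rw [ht]; simp) (fun i => hqt _)
    (fun i j h => htt _ _ fun e => h (by simpa [Nat.pair_eq_pair, Prod.ext_iff] using e))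
  have hDp : D * pn 0 = 0 := (hdD.mul_right _).unique <| by
    have : ∀ n, d n * pn 0 = 0 := fun n => by
      simp only [hd_def, sub_mul, hge 0 _ (Nat.zero_le _), sub_self]
    simpa only [this] using sotSum_zero
  have hpD : pn 0 * D = 0 := by simpa [hD.2.1, (hpn 0).2.1] using congrArg star hDp
  have hlim : ∀ x, Tendsto (fun n => pn n x) atTop (𝓝 ((pn 0 + D) x)) := fun x => by
    have h := (hdD x).tendsto_sum_nat.const_add (pn 0 x)
    refine h.congr fun n => ?_
    have : ∑ i ∈ Finset.range n, d i x = pn n x - pn 0 x := by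
      simpa [hd_def] using Finset.sum_range_sub (fun i => pn i x) n
    rw [this]; abel
  have hP : V.IsProjIn (pn 0 + D) := by
    refine ⟨add_mem (hpn 0).1 hD.1, by simp [(hpn 0).2.1, hD.2.1], ?_⟩
    simp only [add_mul, mul_add, (hpn 0).2.2, hD.2.2, hpD, hDp]; abel
  have hpP : p = pn 0 + D := by
    rw [← hlub _ hP fun n => ?_]
    · ext x
      refine tendsto_nhds_unique ((p.continuous.tendsto _).comp (hlim x)) ?_
      refine (hlim x).congr fun n => ?_
      have : p * pn n = pn n := by simpa [hp.2.1, (hpn n).2.1] using congrArg star (hub n)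
      exact (congrArg (fun T : H →L[ℂ] H => T x) this).symm
    · ext x
      refine tendsto_nhds_unique (((pn n).continuous.tendsto _).comp (hlim x)) ?_
      refine tendsto_const_nhds.congr' ?_
      filter_upwards [eventually_ge_atTop n] with m hm
      exact (congrArg (fun T : H →L[ℂ] H => T x) (hle n m hm)).symm
  have hAq : A * q = A := by simpa [hA.2.1, hq.2.1] using congrArg star hqA
  have hqAi : (q - A) * (q - A) = q - A := by
    simp only [sub_mul, mul_sub, hq.2.2, hqA, hAq, hA.2.2]; abel
  have h0 : V.MvNEquiv (pn 0) (q - A) :=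
    mvn_trans (hpn 0).2.2 hqAi ⟨w 0, hwV 0, hw1 0, hw2 0⟩ hqqA
  have := mvn_add (hpn 0).2.2 hqAi hD.2.2 hA.2.2 hpD
    (by simp only [sub_mul, hqA, hA.2.2, sub_self]) h0 hDA
  rwa [← hpP, sub_add_cancel] at this
end
end

section
/- Let V be a von Neumann algebra on a complex Hilbert space H and let p ∈ V be a properly infinite projection. Then for every σ-finite projection q ∈ V with q ≤ p there is a projection r ∈ V which is both σ-finite and properly infinite and satisfies q ≤ r ≤ p. -/
/-!
Everything rests on the projections `[V'Y]` onto the closed span of `V'Y`, for sets `Y` of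
vectors. Such a projection lies in `V'' = V`, and an operator of `V` that kills `Y` kills
`[V'Y]` (`exists_cyc`). If `Y` is countable then `[V'Y]` is σ-finite by Bessel's inequality
(`sigmaFinite_of_countable`); conversely, a σ-finite projection is `[V'X]` for a countable `X`
(`exists_countable_generating`). Central supports are the special case where `Y` is
invariant under `V` (`exists_centralSupport`).

Call a nonzero vector `ξ` in the range of `p` a *defect vector* if some isometry `v` of `pVp`
satisfies `v* ξ = 0`. Proper infiniteness of `p` supplies defect vectors under every central
projection that meets `q`, and a maximal family `S` of defect vectors with pairwise orthogonal
central supports below that of `q` is countable, since cutting `q` by these central supports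
gives orthogonal nonzero subprojections of `q` (`exists_defect_family`). No central projection
meeting `q` kills all of `S`.

Let `q = [V'X]` with `X` countable and let `Y` consist of all words in the isometries `v_ξ`,
`ξ ∈ S`, applied to the vectors of `X ∪ S`. Then `r = [V'Y]` is σ-finite, lies between `q` and
`p`, and is invariant under each `v_ξ`. If `z` is central with `zr ≠ 0`, then `zξ ≠ 0` for some
`ξ ∈ S`, and `z v_ξ r` implements an equivalence of `zr` with a subprojection of `zr` which
kills `ξ`, whereas `zr` does not. So `zr` is infinite.
-/

noncomputable section

variable {H : Type*} [NormedAddCommGroup H] [InnerProductSpace ℂ H] [CompleteSpace H]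

namespace VonNeumannAlgebra

/-! ### Projections generated by sets of vectors -/

/-- The projection `[V'Y]` onto the closed span of `V'Y`. -/
theorem exists_cyc (V : VonNeumannAlgebra H) (Y : Set H) :
    ∃ e, V.IsProjIn e ∧ (∀ y ∈ Y, e y = y) ∧
      ∀ b ∈ V, (∀ y ∈ Y, b y = 0) → b * e = 0 := by
  let T : Set H := {x | ∃ a ∈ V.commutant, ∃ y ∈ Y, a y = x}
  let K : Submodule ℂ H := (Submodule.span ℂ T).topologicalClosure
  have : CompleteSpace K := (Submodule.isClosed_topologicalClosure _).completeSpace_coe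
  have hsp : IsStarProjection K.starProjection := isStarProjection_starProjection
  have hTK : ∀ x ∈ T, x ∈ K := fun x hx =>
    Submodule.le_topologicalClosure _ (Submodule.subset_span hx)
  -- a closed subspace that contains `T` contains `K`
  have hle : ∀ L : Submodule ℂ H, IsClosed (L : Set H) → T ⊆ L → K ≤ L := fun L hL hT =>
    Submodule.topologicalClosure_minimal _ (Submodule.span_le.2 hT) hL
  refine ⟨K.starProjection, ⟨?_, hsp.isSelfAdjoint.star_eq, hsp.isIdempotentElem.eq⟩, ?_, ?_⟩
  · rw [IsStarProjection.mem_iff hsp]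
    intro a ha
    rw [Submodule.range_starProjection]
    change K ≤ K.comap (a : H →ₗ[ℂ] H)
    refine hle _ ?_ ?_
    · exact (Submodule.isClosed_topologicalClosure _).preimage a.continuous
    · rintro _ ⟨b, hb, y, hy, rfl⟩
      exact hTK _ ⟨a * b, mul_mem ha hb, y, hy, rfl⟩
  · intro y hy
    exact Submodule.starProjection_eq_self_iff.2 (hTK _ ⟨1, one_mem _, y, hy, rfl⟩)
  · intro b hb hby
    have hK : K ≤ LinearMap.ker (b : H →ₗ[ℂ] H) := by
      refine hle _ ?_ ?_
      · exact b.isClosed_ker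
      · rintro _ ⟨a, ha, y, hy, rfl⟩
        have h := DFunLike.congr_fun (mem_commutant_iff.1 ha b hb) y
        change b (a y) = a (b y) at h
        change b (a y) = 0
        rw [h, hby y hy, map_zero]
    ext x
    exact hK (K.starProjection_apply_mem x)

/-- The projection onto the closed span of `V'Y`, where `V'` is the commutant of `V`. -/
def cyc (V : VonNeumannAlgebra H) (Y : Set H) : H →L[ℂ] H := (V.exists_cyc Y).choose

theorem cyc_proj (V : VonNeumannAlgebra H) (Y : Set H) : V.IsProjIn (V.cyc Y) :=
  (V.exists_cyc Y).choose_spec.1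

theorem cyc_apply (V : VonNeumannAlgebra H) {Y : Set H} {y : H} (hy : y ∈ Y) : V.cyc Y y = y :=
  (V.exists_cyc Y).choose_spec.2.1 y hy

theorem mul_cyc_eq_zero (V : VonNeumannAlgebra H) {Y : Set H} {b : H →L[ℂ] H} (hb : b ∈ V)
    (h : ∀ y ∈ Y, b y = 0) : b * V.cyc Y = 0 :=
  (V.exists_cyc Y).choose_spec.2.2 b hb h

theorem mul_cyc_eq_cyc (V : VonNeumannAlgebra H) {Y : Set H} {b : H →L[ℂ] H} (hb : b ∈ V)
    (h : ∀ y ∈ Y, b y = y) : b * V.cyc Y = V.cyc Y := by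
  have := V.mul_cyc_eq_zero (Y := Y) (sub_mem hb (one_mem V)) (fun y hy => by simp [h y hy])
  rwa [sub_mul, one_mul, sub_eq_zero] at this

/-- An operator of `V` that maps `Y` into itself leaves the range of `[V'Y]` invariant. -/
theorem cyc_mul_mul_cyc (V : VonNeumannAlgebra H) {Y : Set H} {b : H →L[ℂ] H} (hb : b ∈ V)
    (h : ∀ y ∈ Y, b y ∈ Y) : V.cyc Y * b * V.cyc Y = b * V.cyc Y := by
  have := V.mul_cyc_eq_zero (Y := Y)
    (mul_mem (sub_mem (V.cyc_proj Y).1 (one_mem V)) hb)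
    (fun y hy => by
      change V.cyc Y (b y) - b y = 0
      rw [V.cyc_apply (h y hy), sub_self])
  rwa [sub_mul, one_mul, sub_mul, sub_eq_zero] at this

theorem eq_mul_of_mul_eq {e f : H →L[ℂ] H} (he : star e = e) (hf : star f = f)
    (h : e * f = f) : f * e = f := by
  have := congrArg star h
  rwa [star_mul, he, hf] at this

/-- By Bessel's inequality, only countably many members of an orthogonal family of projections
act nontrivially on a given vector. -/
theorem countable_setOf_apply_ne_zero (V : VonNeumannAlgebra H) (G : Set (H →L[ℂ] H))
    (hG : ∀ e ∈ G, V.IsProjIn e) (hort : ∀ e ∈ G, ∀ f ∈ G, e ≠ f → e * f = 0) (y : H) :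
    {g | g ∈ G ∧ g y ≠ 0}.Countable := by
  let I := {g // g ∈ G ∧ g y ≠ 0}
  have hin : ∀ g : I, ∀ w : H, inner ℂ (g.1 y) w = inner ℂ y (g.1 w) := by
    intro g w
    have h := ContinuousLinearMap.adjoint_inner_left g.1 w y
    rw [← ContinuousLinearMap.star_eq_adjoint, (hG _ g.2.1).2.1] at h
    exact h
  have hnorm : ∀ g : I, ‖g.1 y‖ ≠ 0 := fun g => norm_ne_zero_iff.2 g.2.2
  let u : I → H := fun g => ((‖g.1 y‖⁻¹ : ℝ) : ℂ) • g.1 y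
  have hu : Orthonormal ℂ u := by
    constructor
    · intro g
      simp only [u, norm_smul, Complex.norm_real, norm_inv, norm_norm]
      exact inv_mul_cancel₀ (hnorm g)
    · intro g f hgf
      have h0 : inner ℂ (g.1 y) (f.1 y) = 0 := by
        rw [hin]
        change inner ℂ y ((g.1 * f.1) y) = 0
        rw [hort _ g.2.1 _ f.2.1 (fun h => hgf (Subtype.ext h))]
        simp
      simp only [u, inner_smul_left, inner_smul_right, h0, mul_zero]
  have hc := (hu.inner_products_summable y).countable_support
  have huniv : (Function.support fun g : I => ‖inner ℂ (u g) y‖ ^ 2) = Set.univ := by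
    refine Set.eq_univ_of_forall fun g => ?_
    have h1 : inner ℂ (g.1 y) y ≠ 0 := by
      have h2 : inner ℂ (g.1 y) y = inner ℂ (g.1 y) (g.1 y) := by
        rw [hin g y, hin g (g.1 y)]
        change _ = inner ℂ y ((g.1 * g.1) y)
        rw [(hG _ g.2.1).2.2]
      rw [h2]
      exact inner_self_ne_zero.2 g.2.2
    have h3 : inner ℂ (u g) y ≠ 0 := by
      simp only [u, inner_smul_left]
      refine mul_ne_zero ?_ h1
      simpa using g.2.2
    simpa [Function.mem_support] using h3
  rw [huniv, Set.countable_univ_iff] at hc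
  exact Set.countable_coe_iff.1 hc

theorem sigmaFinite_of_countable (V : VonNeumannAlgebra H) {Y : Set H} (hY : Y.Countable) :
    V.SigmaFiniteProj (V.cyc Y) := by
  intro G hG hne hort hle
  refine (hY.biUnion fun y _ => V.countable_setOf_apply_ne_zero G hG hort y).mono ?_
  intro g hg
  by_contra hcon
  simp only [Set.mem_iUnion, Set.mem_ofPred_eq, not_exists, not_and, not_not] at hcon
  refine hne g hg ?_
  rw [← hle g hg]
  exact V.mul_cyc_eq_zero (hG g hg).1 fun y hy => hcon y hy hg

/-- Zorn's lemma for sets of elements of `P` that are pairwise related by `R`. -/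
theorem exists_maximal_pairwise {α : Type*} (P : α → Prop) (R : α → α → Prop)
    (hR : ∀ x y, R x y → R y x) :
    ∃ S : Set α, (∀ x ∈ S, P x) ∧ S.Pairwise R ∧
      ∀ x, P x → (∀ y ∈ S, R x y) → x ∈ S := by
  obtain ⟨S, hS⟩ := zorn_subset {S : Set α | (∀ x ∈ S, P x) ∧ S.Pairwise R} (by
    intro c hc hchain
    refine ⟨⋃₀ c, ⟨?_, ?_⟩, fun s hs => Set.subset_sUnion_of_mem hs⟩
    · rintro x ⟨s, hs, hx⟩
      exact (hc hs).1 x hx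
    · exact (Set.pairwise_sUnion hchain.directedOn).2 fun s hs => (hc hs).2)
  refine ⟨S, hS.prop.1, hS.prop.2, fun x hx hxR => ?_⟩
  have hins : insert x S ∈ {S : Set α | (∀ x ∈ S, P x) ∧ S.Pairwise R} := by
    refine ⟨?_, ?_⟩
    · rintro y (rfl | hy)
      · exact hx
      · exact hS.prop.1 y hy
    · exact hS.prop.2.insert fun y hy _ => ⟨hxR y hy, hR _ _ (hxR y hy)⟩
  exact hS.le_of_ge hins (Set.subset_insert x S) (Set.mem_insert x S)

/-- A σ-finite projection is generated by countably many vectors, obtained from a maximal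
orthogonal family of cyclic subprojections. -/
theorem exists_countable_generating (V : VonNeumannAlgebra H) {q : H →L[ℂ] H}
    (hq : V.IsProjIn q) (hs : V.SigmaFiniteProj q) :
    ∃ X : Set H, X.Countable ∧ q = V.cyc X := by
  obtain ⟨X, hXP, hXR, hXmax⟩ := exists_maximal_pairwise
    (fun x : H => q x = x ∧ x ≠ 0) (fun x y => V.cyc {x} * V.cyc {y} = 0) (by
      intro x y h
      have := congrArg star h
      rwa [star_mul, (V.cyc_proj _).2.1, (V.cyc_proj _).2.1, star_zero] at this)
  have hself : ∀ x : H, V.cyc {x} x = x := fun x => V.cyc_apply rfl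
  have hinj : Set.InjOn (fun x => V.cyc {x}) X := by
    intro x hx y hy hxy
    by_contra hne
    have h0 : V.cyc {x} * V.cyc {y} = 0 := hXR hx hy hne
    have h1 : V.cyc {x} = V.cyc {y} := hxy
    rw [← h1, (V.cyc_proj _).2.2] at h0
    apply (hXP x hx).2
    rw [← hself x, h0]
    rfl
  have hXc : X.Countable := by
    refine Set.countable_of_injective_of_countable_image hinj ?_
    refine hs _ ?_ ?_ ?_ ?_
    · rintro _ ⟨x, hx, rfl⟩
      exact V.cyc_proj _
    · rintro _ ⟨x, hx, rfl⟩ h0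
      apply (hXP x hx).2
      rw [← hself x]
      change V.cyc {x} = 0 at h0
      rw [h0]
      rfl
    · rintro _ ⟨x, hx, rfl⟩ _ ⟨y, hy, rfl⟩ hne
      exact hXR hx hy fun h => hne (by rw [h])
    · rintro _ ⟨x, hx, rfl⟩
      refine eq_mul_of_mul_eq hq.2.1 (V.cyc_proj _).2.1 (V.mul_cyc_eq_cyc hq.1 ?_)
      rintro _ rfl
      exact (hXP _ hx).1
  refine ⟨X, hXc, ?_⟩
  have he := V.cyc_proj X
  have hqe : q * V.cyc X = V.cyc X := V.mul_cyc_eq_cyc hq.1 fun x hx => (hXP x hx).1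
  have heq : V.cyc X * q = V.cyc X := eq_mul_of_mul_eq hq.2.1 he.2.1 hqe
  ext h
  by_contra hne
  -- a vector of `q` orthogonal to `[V'X]` could be added to the maximal family
  have hy : q h - V.cyc X h ∈ X := by
    refine hXmax _ ⟨?_, sub_ne_zero.2 hne⟩ fun x hx => ?_
    · have h1 : q (q h) = q h := DFunLike.congr_fun hq.2.2 h
      have h2 : q (V.cyc X h) = V.cyc X h := DFunLike.congr_fun hqe h
      rw [map_sub, h1, h2]
    · have h1 : V.cyc X * V.cyc {x} = V.cyc {x} := V.mul_cyc_eq_cyc he.1 (by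
        rintro _ rfl
        exact V.cyc_apply hx)
      have h2 := eq_mul_of_mul_eq he.2.1 (V.cyc_proj {x}).2.1 h1
      have h3 : V.cyc {x} * q = V.cyc {x} := by
        rw [← h2, mul_assoc, heq]
      have h4 : V.cyc {x} * V.cyc {q h - V.cyc X h} = 0 := by
        refine V.mul_cyc_eq_zero (V.cyc_proj _).1 ?_
        rintro _ rfl
        have h5 : V.cyc {x} (q h) = V.cyc {x} h := DFunLike.congr_fun h3 h
        have h6 : V.cyc {x} (V.cyc X h) = V.cyc {x} h := DFunLike.congr_fun h2 h
        rw [map_sub, h5, h6, sub_self]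
      have h7 := congrArg star h4
      rwa [star_mul, (V.cyc_proj _).2.1, (V.cyc_proj _).2.1, star_zero] at h7
  have h1 := V.cyc_apply hy
  have h2 : V.cyc X (q h) = V.cyc X h := DFunLike.congr_fun heq h
  have h3 : V.cyc X (V.cyc X h) = V.cyc X h := DFunLike.congr_fun he.2.2 h
  rw [map_sub, h2, h3, sub_self] at h1
  exact hne (sub_eq_zero.1 h1.symm)

/-! ### Central supports -/

/-- The central support of a set of vectors, namely `[V'Y]` for `Y = VA`. -/
theorem exists_centralSupport (V : VonNeumannAlgebra H) (A : Set H) :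
    ∃ c, V.CentralProj c ∧ (∀ x ∈ A, c x = x) ∧
      ∀ z, V.CentralProj z → (∀ x ∈ A, z x = 0) → z * c = 0 := by
  let Y : Set H := {y | ∃ b ∈ V, ∃ x ∈ A, b x = y}
  have hinv : ∀ b ∈ V, V.cyc Y * b * V.cyc Y = b * V.cyc Y := by
    intro b hb
    refine V.cyc_mul_mul_cyc hb ?_
    rintro _ ⟨a, ha, x, hx, rfl⟩
    exact ⟨b * a, mul_mem hb ha, x, hx, rfl⟩
  refine ⟨V.cyc Y, ⟨V.cyc_proj Y, fun b hb => ?_⟩, fun x hx => ?_, fun z hz h => ?_⟩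
  · have h := congrArg star (hinv (star b) (star_mem hb))
    simp only [star_mul, star_star, (V.cyc_proj Y).2.1] at h
    rw [← h, ← mul_assoc, hinv b hb]
  · exact V.cyc_apply ⟨1, one_mem V, x, hx, rfl⟩
  · refine V.mul_cyc_eq_zero hz.1.1 ?_
    rintro _ ⟨b, hb, x, hx, rfl⟩
    have h1 := DFunLike.congr_fun (hz.2 b hb) x
    change z (b x) = b (z x) at h1
    rw [h1, h x hx, map_zero]

/-- The central support of a set of vectors: the least central projection fixing all of them. -/
def csupp (V : VonNeumannAlgebra H) (A : Set H) : H →L[ℂ] H := (V.exists_centralSupport A).choose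

theorem csupp_central (V : VonNeumannAlgebra H) (A : Set H) : V.CentralProj (V.csupp A) :=
  (V.exists_centralSupport A).choose_spec.1

theorem csupp_apply (V : VonNeumannAlgebra H) {A : Set H} {x : H} (hx : x ∈ A) :
    V.csupp A x = x :=
  (V.exists_centralSupport A).choose_spec.2.1 x hx

theorem mul_csupp_eq_zero (V : VonNeumannAlgebra H) {A : Set H} {z : H →L[ℂ] H}
    (hz : V.CentralProj z) (h : ∀ x ∈ A, z x = 0) : z * V.csupp A = 0 :=
  (V.exists_centralSupport A).choose_spec.2.2 z hz h

theorem CentralProj.mul_proj {V : VonNeumannAlgebra H} {z e : H →L[ℂ] H}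
    (hz : V.CentralProj z) (he : V.IsProjIn e) : V.IsProjIn (z * e) := by
  refine ⟨mul_mem hz.1.1 he.1, ?_, ?_⟩
  · rw [star_mul, he.2.1, hz.1.2.1, hz.2 e he.1]
  · calc z * e * (z * e) = z * (e * z) * e := by simp only [mul_assoc]
      _ = (z * z) * (e * e) := by rw [← hz.2 e he.1]; simp only [mul_assoc]
      _ = z * e := by rw [hz.1.2.2, he.2.2]

theorem CentralProj.mul {V : VonNeumannAlgebra H} {z w : H →L[ℂ] H}
    (hz : V.CentralProj z) (hw : V.CentralProj w) : V.CentralProj (z * w) := by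
  refine ⟨hz.mul_proj hw.1, fun v hv => ?_⟩
  rw [mul_assoc, hw.2 v hv, ← mul_assoc, hz.2 v hv, mul_assoc]

theorem CentralProj.one_sub {V : VonNeumannAlgebra H} {z : H →L[ℂ] H}
    (hz : V.CentralProj z) : V.CentralProj (1 - z) := by
  refine ⟨⟨sub_mem (one_mem V) hz.1.1, ?_, ?_⟩, fun v hv => ?_⟩
  · rw [star_sub, star_one, hz.1.2.1]
  · rw [mul_sub, mul_one, sub_mul, one_mul, hz.1.2.2, sub_self, sub_zero]
  · rw [sub_mul, mul_sub, hz.2 v hv, one_mul, mul_one]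

theorem mul_csupp_eq_csupp (V : VonNeumannAlgebra H) {A : Set H} {z : H →L[ℂ] H}
    (hz : V.CentralProj z) (h : ∀ x ∈ A, z x = x) : z * V.csupp A = V.csupp A := by
  have := V.mul_csupp_eq_zero (A := A) hz.one_sub (fun x hx => by simp [h x hx])
  rw [sub_mul, one_mul, sub_eq_zero] at this
  exact this.symm

/-! ### Defect vectors -/

/-- A defect vector of `p`: a nonzero vector in the range of `p` that is orthogonal to the range
of some isometry `v` of the corner `pVp`. -/
def IsDefect (V : VonNeumannAlgebra H) (p : H →L[ℂ] H) (ξ : H) : Prop :=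
  p ξ = ξ ∧ ξ ≠ 0 ∧ ∃ v ∈ V, star v * v = p ∧ p * v = v ∧ star v ξ = 0

/-- If `zp` is infinite, there is a defect vector of `p` in the range of `z`: an isometry of
`zpVzp` that is not onto is extended by the identity of `(1 - z)p`. -/
theorem exists_isDefect {V : VonNeumannAlgebra H} {p z : H →L[ℂ] H} (hp : V.IsProjIn p)
    (hz : V.CentralProj z) (hinf : ¬ V.FiniteProj (z * p)) :
    ∃ ξ, V.IsDefect p ξ ∧ z ξ = ξ := by
  have hzp := hz.mul_proj hp
  have hcomm : z * p = p * z := hz.2 p hp.1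
  simp only [FiniteProj, hzp, true_and, not_forall] at hinf
  obtain ⟨g, hg, hgle, ⟨u, huV, hug, hup⟩, hgne⟩ := hinf
  have hugu : u * g = u := by
    have h0 : star (u * g - u) * (u * g - u) = 0 := by
      have : star (u * g - u) * (u * g - u)
          = g * (star u * u) * g - g * (star u * u) - (star u * u) * g + star u * u := by
        rw [star_sub, star_mul, hg.2.1]
        noncomm_ring
      rw [this, hug, hg.2.2, hg.2.2]
      abel
    exact sub_eq_zero.1 ((CStarRing.star_mul_self_eq_zero_iff _).1 h0)
  have hgle' : z * p * g = g := by
    have := congrArg star hgle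
    rwa [star_mul, hg.2.1, hzp.2.1] at this
  have hpz : p * (z * p) = z * p := by rw [← mul_assoc, ← hcomm, mul_assoc, hp.2.2]
  have hzz : z * (z * p) = z * p := by rw [← mul_assoc, hz.1.2.2]
  have hpg : p * g = g := by rw [← hgle', ← mul_assoc, hpz]
  have hzg : z * g = g := by rw [← hgle', ← mul_assoc, hzz]
  have hgsu : g * star u = star u := by
    have := congrArg star hugu
    rwa [star_mul, hg.2.1] at this
  have hk : V.IsProjIn ((1 - z) * p) := hz.one_sub.mul_proj hp
  have hgk : g * ((1 - z) * p) = 0 := by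
    rw [← hgle]
    calc g * (z * p) * ((1 - z) * p) = g * ((z * p) * p - (z * p) * (z * p)) := by noncomm_ring
      _ = 0 := by rw [hzp.2.2, mul_assoc z, hp.2.2, sub_self, mul_zero]
  have huk : u * ((1 - z) * p) = 0 := by rw [← hugu, mul_assoc, hgk, mul_zero]
  have hku : ((1 - z) * p) * star u = 0 := by
    have := congrArg star huk
    rwa [star_mul, hk.2.1, star_zero] at this
  obtain ⟨h, hh⟩ : ∃ h, (z * p - g) h ≠ 0 := by
    by_contra hcon
    push Not at hcon
    refine hgne (sub_eq_zero.1 ?_).symm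
    ext h
    exact hcon h
  have hv : star (star u + (1 - z) * p) = u + (1 - z) * p := by
    rw [star_add, star_star, hk.2.1]
  have fix : ∀ {b : H →L[ℂ] H}, b * (z * p - g) = z * p - g →
      b ((z * p - g) h) = (z * p - g) h := fun hb => DFunLike.congr_fun hb h
  refine ⟨(z * p - g) h, ⟨fix ?_, hh, star u + (1 - z) * p,
    add_mem (star_mem huV) hk.1, ?_, ?_, ?_⟩, fix ?_⟩
  · rw [mul_sub, hpz, hpg]
  · rw [hv, add_mul, mul_add, mul_add, hup, huk, hku, hk.2.2]
    noncomm_ring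
  · have h1 : p * star u = star u := by rw [← hgsu, ← mul_assoc, hpg]
    have h2 : p * ((1 - z) * p) = (1 - z) * p := by
      rw [sub_mul, one_mul, mul_sub, hpz, hp.2.2]
    rw [mul_add, h1, h2]
  · rw [hv]
    have h1 : (u + (1 - z) * p) * (z * p - g) = 0 := by
      have a1 : u * (z * p) = u := by
        calc u * (z * p) = u * (g * (z * p)) := by rw [← mul_assoc u g, hugu]
          _ = u := by rw [hgle, hugu]
      have a2 : (1 - z) * p * (z * p - g) = 0 := by
        rw [mul_assoc, mul_sub, hpz, hpg, sub_mul, one_mul, mul_sub, hzz, hzg, sub_self]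
      rw [add_mul, a2, mul_sub, a1, hugu, sub_self, add_zero]
    exact DFunLike.congr_fun h1 h
  · rw [mul_sub, hzz, hzg]

/-- Countably many defect vectors of `p` suffice to detect every central projection that meets
the σ-finite projection `q`. -/
theorem exists_defect_family {V : VonNeumannAlgebra H} {p q : H →L[ℂ] H}
    (hp : V.ProperlyInfiniteProj p) (hq : V.IsProjIn q) (hs : V.SigmaFiniteProj q)
    (hqp : q * p = q) :
    ∃ S : Set H, S.Countable ∧ (∀ ξ ∈ S, V.IsDefect p ξ) ∧
      ∀ z, V.CentralProj z → z * q ≠ 0 → ∃ ξ ∈ S, z ξ ≠ 0 := by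
  set c := V.csupp (Set.range q) with hc
  have hcc : V.CentralProj c := V.csupp_central _
  have hcq : c * q = q := by
    ext h
    exact V.csupp_apply (Set.mem_range_self h)
  have hczero : ∀ z, V.CentralProj z → z * q = 0 → z * c = 0 := by
    intro z hz h0
    refine V.mul_csupp_eq_zero hz ?_
    rintro _ ⟨h, rfl⟩
    exact DFunLike.congr_fun h0 h
  have hC : ∀ ξ : H, V.CentralProj (V.csupp {ξ}) := fun ξ => V.csupp_central _
  have hself : ∀ ξ : H, V.csupp {ξ} ξ = ξ := fun ξ => V.csupp_apply rfl
  obtain ⟨S, hSP, hSR, hSmax⟩ := exists_maximal_pairwise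
    (fun ξ : H => V.IsDefect p ξ ∧ c ξ = ξ) (fun ξ η => V.csupp {ξ} * V.csupp {η} = 0) (by
      intro ξ η h
      rwa [(hC ξ).2 _ (hC η).1.1] at h)
  have hne : ∀ ξ ∈ S, V.csupp {ξ} * q ≠ 0 := by
    intro ξ hξ h0
    have h1 := hczero _ (hC ξ) h0
    have h2 : c * V.csupp {ξ} = V.csupp {ξ} := V.mul_csupp_eq_csupp hcc (by
      rintro _ rfl
      exact (hSP _ hξ).2)
    rw [hcc.2 _ (hC ξ).1.1, h1] at h2
    apply (hSP ξ hξ).1.2.1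
    rw [← hself ξ, ← h2]
    rfl
  have hort : ∀ ξ ∈ S, ∀ η ∈ S, ξ ≠ η → V.csupp {ξ} * q * (V.csupp {η} * q) = 0 := by
    intro ξ hξ η hη hξη
    rw [mul_assoc, ← mul_assoc q, ← (hC η).2 q hq.1, mul_assoc _ q q, ← mul_assoc, hSR hξ hη hξη,
      zero_mul]
  refine ⟨S, ?_, fun ξ hξ => (hSP ξ hξ).1, ?_⟩
  · have hinj : Set.InjOn (fun ξ => V.csupp {ξ} * q) S := by
      intro ξ hξ η hη h
      by_contra hξη
      have h0 := hort ξ hξ η hη hξη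
      have h1 : V.csupp {ξ} * q = V.csupp {η} * q := h
      rw [← h1, ((hC ξ).mul_proj hq).2.2] at h0
      exact hne ξ hξ h0
    refine Set.countable_of_injective_of_countable_image hinj (hs _ ?_ ?_ ?_ ?_)
    · rintro _ ⟨ξ, hξ, rfl⟩
      exact (hC ξ).mul_proj hq
    · rintro _ ⟨ξ, hξ, rfl⟩
      exact hne ξ hξ
    · rintro _ ⟨ξ, hξ, rfl⟩ _ ⟨η, hη, rfl⟩ h
      exact hort ξ hξ η hη fun h' => h (by rw [h'])
    · rintro _ ⟨ξ, hξ, rfl⟩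
      change V.csupp {ξ} * q * q = V.csupp {ξ} * q
      rw [mul_assoc, hq.2.2]
  · intro z hz hzq
    by_contra hcon
    push Not at hcon
    have hzc := hz.mul hcc
    have hzcq : z * c * q ≠ 0 := by rwa [mul_assoc, hcq]
    have hpq : p * q = q := by
      have := congrArg star hqp
      rwa [star_mul, hq.2.1, hp.1.2.1] at this
    have hzcp : z * c * p ≠ 0 := by
      intro h0
      apply hzcq
      rw [← hpq, ← mul_assoc, h0, zero_mul]
    obtain ⟨ξ, hξ, hzcξ⟩ := exists_isDefect hp.1 hzc (hp.2 _ hzc hzcp)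
    have hzξ : z ξ = ξ := by
      have : (z * (z * c)) ξ = (z * c) ξ := by rw [← mul_assoc, hz.1.2.2]
      change z ((z * c) ξ) = (z * c) ξ at this
      rwa [hzcξ] at this
    have hcξ : c ξ = ξ := by
      have : (c * (z * c)) ξ = (z * c) ξ := by
        rw [← mul_assoc, hcc.2 z hz.1.1, mul_assoc, hcc.1.2.2]
      change c ((z * c) ξ) = (z * c) ξ at this
      rwa [hzcξ] at this
    have hmem : ξ ∈ S := by
      refine hSmax ξ ⟨hξ, hcξ⟩ fun η hη => ?_
      have h1 : z * V.csupp {η} = 0 := V.mul_csupp_eq_zero hz (by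
        rintro _ rfl
        exact hcon _ hη)
      have h2 : z * V.csupp {ξ} = V.csupp {ξ} := V.mul_csupp_eq_csupp hz (by
        rintro _ rfl
        exact hzξ)
      rw [← h2, hz.2 _ (hC ξ).1.1, mul_assoc, h1, mul_zero]
    exact hξ.2.1 (hzξ.symm.trans (hcon ξ hmem))

end VonNeumannAlgebra

/-- if `p` is a properly infinite projection of `V`, then for every σ-finite
projection `q ∈ V` with `q ≤ p` there is a projection `r ∈ V`, both σ-finite and properly
infinite, with `q ≤ r ≤ p`. (For projections, `q ≤ p` means `qp = q`.) -/
theorem stmt14 (V : VonNeumannAlgebra H) (p : H →L[ℂ] H)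
    (hp : V.ProperlyInfiniteProj p) :
    ∀ q, V.IsProjIn q → V.SigmaFiniteProj q → q * p = q →
      ∃ r, V.IsProjIn r ∧ V.SigmaFiniteProj r ∧ V.ProperlyInfiniteProj r ∧
        q * r = q ∧ r * p = r := by
  intro q hq hs hqp
  obtain ⟨X, hXc, hX⟩ := V.exists_countable_generating hq hs
  obtain ⟨S, hSc, hSd, hSz⟩ := VonNeumannAlgebra.exists_defect_family hp hq hs hqp
  have hpq : p * q = q := by
    have := congrArg star hqp
    rwa [star_mul, hq.2.1, hp.1.2.1] at this
  have hXq : ∀ x ∈ X, q x = x := fun x hx => by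
    rw [hX]
    exact V.cyc_apply hx
  choose v hvV hvp hpv hvξ using fun ξ : S => (hSd ξ.1 ξ.2).2.2
  have hw : ∀ l : List S, (l.map v).prod ∈ V := fun l =>
    list_prod_mem (S := V.toStarSubalgebra) fun a ha => by
      obtain ⟨ξ, -, rfl⟩ := List.mem_map.1 ha
      exact hvV ξ
  have := hSc.to_subtype
  have := (hXc.union hSc).to_subtype
  let Y : Set H := Set.range fun t : List S × ↥(X ∪ S) => (t.1.map v).prod t.2.1
  have hXY : ∀ x ∈ X ∪ S, x ∈ Y := fun x hx => ⟨([], ⟨x, hx⟩), by simp⟩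
  have hpX : ∀ x ∈ X ∪ S, p x = x := by
    rintro x (hx | hx)
    · have : p (q x) = q x := DFunLike.congr_fun hpq x
      rwa [hXq x hx] at this
    · exact (hSd x hx).1
  have hpY : ∀ y ∈ Y, p y = y := by
    rintro _ ⟨⟨l, x, hx⟩, rfl⟩
    cases l with
    | nil => simpa using hpX x hx
    | cons ξ l =>
      have h1 : p * ((ξ :: l).map v).prod = ((ξ :: l).map v).prod := by
        rw [List.map_cons, List.prod_cons, ← mul_assoc, hpv]
      exact DFunLike.congr_fun h1 x
  set r := V.cyc Y with hrdef
  have hr : V.IsProjIn r := V.cyc_proj Y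
  have hpr : p * r = r := V.mul_cyc_eq_cyc hp.1.1 hpY
  have hrp : r * p = r := VonNeumannAlgebra.eq_mul_of_mul_eq hp.1.2.1 hr.2.1 hpr
  have hrq : r * q = q := by
    rw [hX]
    exact V.mul_cyc_eq_cyc hr.1 fun x hx => V.cyc_apply (hXY x (Or.inl hx))
  have hinv : ∀ ξ : S, r * v ξ * r = v ξ * r := by
    intro ξ
    refine V.cyc_mul_mul_cyc (hvV ξ) ?_
    rintro _ ⟨⟨l, x⟩, rfl⟩
    exact ⟨(ξ :: l, x), by simp⟩
  refine ⟨r, hr, V.sigmaFinite_of_countable (Set.countable_range _), ⟨hr, ?_⟩,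
    VonNeumannAlgebra.eq_mul_of_mul_eq hr.2.1 hq.2.1 hrq, hrp⟩
  intro z hz hzr hfin
  obtain ⟨ξ, hξ, hzξ⟩ : ∃ ξ ∈ S, z ξ ≠ 0 := by
    by_contra hcon
    push Not at hcon
    have hzq : z * q = 0 := by
      by_contra h
      obtain ⟨ξ, hξ, h1⟩ := hSz z hz h
      exact h1 (hcon ξ hξ)
    refine hzr (V.mul_cyc_eq_zero hz.1.1 ?_)
    rintro _ ⟨⟨l, x, hx⟩, rfl⟩
    have h1 := DFunLike.congr_fun (hz.2 _ (hw l)) x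
    change z ((l.map v).prod x) = (l.map v).prod (z x) at h1
    have h2 : z x = 0 := by
      rcases hx with hx | hx
      · rw [← hXq x hx]
        exact DFunLike.congr_fun hzq x
      · exact hcon x hx
    change z ((l.map v).prod x) = 0
    rw [h1, h2, map_zero]
  -- `zr` is equivalent to `z a r a*`, which kills `ξ`
  set a := v ⟨ξ, hξ⟩ with ha
  have haV : a ∈ V := hvV _
  have hap : star a * a = p := hvp _
  have haξ : star a ξ = 0 := hvξ ⟨ξ, hξ⟩
  have hra : r * a * r = a * r := hinv _
  have hra' : r * star a * r = r * star a := by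
    have := congrArg star hra
    simpa only [star_mul, hr.2.1, mul_assoc] using this
  have hzr' := hz.mul_proj hr
  have hprod : r * star a * (a * r) = r := by
    calc r * star a * (a * r) = r * (star a * a) * r := by simp only [mul_assoc]
      _ = r := by rw [hap, hrp, hr.2.2]
  set g := z * (a * r * (r * star a)) with hg
  have hb : V.IsProjIn (a * r * (r * star a)) := by
    refine ⟨mul_mem (mul_mem haV hr.1) (mul_mem hr.1 (star_mem haV)), ?_, ?_⟩
    · simp only [star_mul, star_star, hr.2.1]
    · calc a * r * (r * star a) * (a * r * (r * star a))
          = a * r * (r * star a * (a * r)) * (r * star a) := by simp only [mul_assoc]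
        _ = a * r * (r * star a) := by rw [hprod, mul_assoc a, hr.2.2]
  have hgproj : V.IsProjIn g := hz.mul_proj hb
  have hgle : g * (z * r) = g := by
    have h1 : a * r * (r * star a) * r = a * r * (r * star a) := by
      rw [mul_assoc, hra']
    calc g * (z * r) = z * ((a * r * (r * star a)) * z) * r := by rw [hg]; simp only [mul_assoc]
      _ = (z * z) * ((a * r * (r * star a)) * r) := by
          rw [← hz.2 _ hb.1]; simp only [mul_assoc]
      _ = g := by rw [hz.1.2.2, h1]
  have hzs : star z = z := hz.1.2.1
  have hequiv : V.MvNEquiv g (z * r) := by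
    refine ⟨z * (r * star a), mul_mem hz.1.1 (mul_mem hr.1 (star_mem haV)), ?_, ?_⟩
    · have hc := hz.2 (a * r) (mul_mem haV hr.1)
      calc star (z * (r * star a)) * (z * (r * star a))
          = (a * r) * z * z * (r * star a) := by
            simp only [star_mul, star_star, hr.2.1, hzs, mul_assoc]
        _ = g := by rw [← hc, hg, mul_assoc z, ← hc, ← mul_assoc z, hz.1.2.2, mul_assoc]
    · have hc := hz.2 (r * star a) (mul_mem hr.1 (star_mem haV))
      calc z * (r * star a) * star (z * (r * star a))
          = z * ((r * star a) * (a * r)) * z := by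
            simp only [star_mul, star_star, hr.2.1, hzs, mul_assoc]
        _ = z * r := by rw [hprod, mul_assoc, ← hz.2 r hr.1, ← mul_assoc, hz.1.2.2]
  have heq := hfin.2 g hgproj hgle hequiv
  apply hzξ
  have hrξ : r ξ = ξ := V.cyc_apply (hXY ξ (Or.inr hξ))
  have h1 : g ξ = z (r ξ) := by
    rw [heq]
    rfl
  have h2 : g ξ = z (a (r (r (star a ξ)))) := rfl
  rw [← hrξ, ← h1, h2, haξ]
  simp
end
end

section
/- Let V be a von Neumann algebra on a complex Hilbert space H and let p ∈ V be a finite and σ-finite projection with p ≠ 1. Let u ∈ V be a partial isometry with uu* ≤ p such that (p − uu*)·x·(1 − u*u) = 0 for every x ∈ V (i.e., u is a complete tripotent in pV). Then uu* = p and u extends to a unitary: there exists ũ ∈ V with ũ*ũ = ũũ* = 1 and ũ·(u*u) = u. -/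
/-!
The theorem has two parts.

*The final projection is `p`.* Since `(p - uu*) V (1 - u*u) = 0`, a central projection `z` satisfies
`z (p - uu*) = p - uu*` and `z (1 - u*u) = 0` (`exists_central_sep`). Then `z u p + (1 - z) p` is an
equivalence between `p` and a subprojection of `p`; finiteness makes that subprojection all of `p`,
which gives `z uu* = z p` and hence `uu* = p` (`eq_of_finite`).

*Extension to a unitary.* As `u` identifies the range of `u*u` with the range of `p`, the point is to
cancel these: the complements `1 - u*u` and `1 - p` have to be shown equivalent. The argument is
Evans' cancellation theorem from ring theory, which needs stable range one for the finite corner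
`pVp`.

* Every `a ∈ pVp` has the form `a = |a*| y` with `y` unitary in `pVp` (`exists_unitary_polar`).
  The isometry `|a*| x ↦ a* x` is extended by Zorn's lemma to a maximal partial isometry of `pVp`
  (`exists_maximal_partialIsometry`). The order is inclusion of graphs, which are subspaces of
  `H × H` invariant under the commutant, so that unions of chains are immediate. A maximal extension
  has no intertwiner between its two complements, and `eq_of_finite` shows that it is unitary.
* For `a = u p` and this `y`, the element `a + (p - aa*) y = (|a*| + p - |a*|²) y` is invertible in
  `pVp`, since `t + 1 - t² ≥ 1` for `0 ≤ t ≤ 1` (`exists_stable_range`).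
* With `k = p + (1 - p) u* y` this says that `u k` is invertible in `pVp`, so the range of `k` is a
  common complement of `ker p` and `ker u`. Projecting along it gives an isomorphism `T ∈ V` from the
  range of `1 - u*u` onto the range of `1 - p` (`exists_complement_iso`).
* `G = T + u` is invertible in `V` and `G*G` fixes `u*u`, so the unitary `G |G|⁻¹` extends `u`
  (`exists_unitary_of_invertible`).
-/

noncomputable section

variable {H : Type*} [NormedAddCommGroup H] [InnerProductSpace ℂ H] [CompleteSpace H]

/-! ### Membership in `V` and central projections -/

/-- The double commutant property, as a criterion for membership in `V`. -/
lemma vn_mem_iff (V : VonNeumannAlgebra H) (x : H →L[ℂ] H) :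
    x ∈ V ↔ ∀ y ∈ V.commutant, y * x = x * y := by
  conv_lhs => rw [← V.commutant_commutant, VonNeumannAlgebra.mem_commutant_iff]

lemma vn_sqrt_mem (V : VonNeumannAlgebra H) {a : H →L[ℂ] H} (ha : a ∈ V) :
    CFC.sqrt a ∈ V := by
  rw [vn_mem_iff] at ha ⊢
  intro y hy
  have h : Commute a y := (ha y hy).symm
  exact (h.cfcₙ_nnreal _).symm

/-- Two elements `e`, `g` with `e V g = 0` are separated by a central projection: the projection
onto the closed subspace `{h | e x h = 0 for all x ∈ V}` is invariant under `V` and under its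
commutant, hence central. -/
lemma exists_central_sep (V : VonNeumannAlgebra H) {e g : H →L[ℂ] H} (he : e ∈ V)
    (h : ∀ x ∈ V, e * x * g = 0) :
    ∃ z, V.CentralProj z ∧ z * g = 0 ∧ e * z = e := by
  let N : Submodule ℂ H := ⨅ x : V, LinearMap.ker (e * (x : H →L[ℂ] H)).toLinearMap
  have hmem : ∀ v : H, v ∈ N ↔ ∀ x ∈ V, e (x v) = 0 := by
    intro v
    simp [N, Submodule.mem_iInf]
  have hNc : IsClosed (N : Set H) := by
    have : (N : Set H) = ⋂ x : V, (LinearMap.ker (e * (x : H →L[ℂ] H)).toLinearMap : Set H) := by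
      simp [N]
    rw [this]
    exact isClosed_iInter fun x => ContinuousLinearMap.isClosed_ker _
  have : CompleteSpace N := hNc.completeSpace_coe
  have hsp : IsStarProjection N.starProjection := isStarProjection_starProjection
  have hV : N.starProjection ∈ V := by
    rw [VonNeumannAlgebra.IsStarProjection.mem_iff hsp]
    intro y hy v hv
    simp only [Submodule.mem_comap, Submodule.range_starProjection] at hv ⊢
    change y v ∈ N
    rw [hmem] at hv ⊢
    intro x hx
    have h1 : x (y v) = y (x v) := DFunLike.congr_fun (VonNeumannAlgebra.mem_commutant_iff.1 hy x hx) v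
    have h2 : e (y (x v)) = y (e (x v)) :=
      DFunLike.congr_fun (VonNeumannAlgebra.mem_commutant_iff.1 hy e he) (x v)
    rw [h1, h2, hv x hx, map_zero]
  have hV' : N.starProjection ∈ V.commutant := by
    rw [VonNeumannAlgebra.IsStarProjection.mem_iff hsp, V.commutant_commutant]
    intro y hy v hv
    simp only [Submodule.mem_comap, Submodule.range_starProjection] at hv ⊢
    change y v ∈ N
    rw [hmem] at hv ⊢
    intro x hx
    exact hv (x * y) (mul_mem hx hy)
  have hs : star N.starProjection = N.starProjection := hsp.isSelfAdjoint
  have hi : N.starProjection * N.starProjection = N.starProjection := hsp.isIdempotentElem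
  refine ⟨1 - N.starProjection, ⟨⟨sub_mem (one_mem V) hV, by simp [hs], ?_⟩, ?_⟩, ?_, ?_⟩
  · simp [mul_sub, sub_mul, hi]
  · intro v hv
    have := VonNeumannAlgebra.mem_commutant_iff.1 hV' v hv
    simp [mul_sub, sub_mul, this]
  · ext v
    have : g v ∈ N := by
      rw [hmem]
      intro x hx
      exact DFunLike.congr_fun (h x hx) v
    simp [Submodule.starProjection_eq_self_iff.2 this]
  · ext v
    have : e (N.starProjection v) = 0 :=
      (hmem (N.starProjection v)).1 (Submodule.starProjection_apply_mem _ _) 1 (one_mem V)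
    simp [this]

/-! ### Complete partial isometries into a finite projection -/

/-- A partial isometry into a finite projection `p` that is maximal, in the sense that the
complement `p - w w*` and the part `(1 - w*w) p` of `p` have no intertwiner in `V`, has final
projection `p`. With `z` a central projection separating the two, `z w p + (1 - z) p` is an
equivalence of `p` with a subprojection of `p`, so finiteness forces `z w w* = z p`. -/
lemma eq_of_finite (V : VonNeumannAlgebra H) {p : H →L[ℂ] H} (hfin : V.FiniteProj p)
    {w : H →L[ℂ] H} (hw : w ∈ V) (hwp : w * star w * p = w * star w) (htri : w * star w * w = w)
    (h : ∀ x ∈ V, (p - w * star w) * x * ((1 - star w * w) * p) = 0) : w * star w = p := by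
  obtain ⟨⟨hp, hps, hpp⟩, hfin⟩ := hfin
  have hsw : star w ∈ V := star_mem hw
  obtain ⟨z, ⟨⟨hz, hzs, hzz⟩, hzc⟩, h1, h2⟩ := exists_central_sep V
    (sub_mem hp (mul_mem hw hsw)) h
  have hpw' : p * (w * star w) = w * star w := by simpa [hps] using congrArg star hwp
  have hpw : p * w = w := by
    calc p * w = p * (w * star w) * w := by rw [mul_assoc, htri]
      _ = w := by rw [hpw', htri]
  have hwp2 : star w * p = star w := by simpa [hps] using congrArg star hpw
  have czp := hzc p hp
  have czw := hzc w hw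
  have czsw := hzc _ hsw
  have h1' : z * (star w * (w * p)) = z * p := by
    have : z * p - z * (star w * (w * p)) = 0 := by
      rw [← h1]; noncomm_ring
    exact (sub_eq_zero.1 this).symm
  let v := z * (w * p) + (1 - z) * p
  have hv : v ∈ V := add_mem (mul_mem hz (mul_mem hw hp)) (mul_mem (sub_mem (one_mem V) hz) hp)
  have hsv : star v = z * (p * star w) + (1 - z) * p := by
    simp only [v, star_add, star_mul, star_sub, star_one, hzs, hps]
    rw [mul_sub, ← czp, sub_mul, mul_assoc, ← czsw, ← mul_assoc, ← czp]
    noncomm_ring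
  -- cutting with a central projection is multiplicative
  have key : ∀ a b c d : H →L[ℂ] H, a ∈ V → b ∈ V →
      (z * a + (1 - z) * b) * (z * c + (1 - z) * d) = z * (a * c) + (1 - z) * (b * d) := by
    intro a b c d ha hb
    have ca := hzc a ha
    have cb := hzc b hb
    linear_combination (norm := noncomm_ring) -(z * ca * c) + hzz * (a * c) + (z * ca * d)
      - hzz * (a * d) - cb * c + (z * cb * c) - hzz * (b * c) + cb * d - z * cb * d + hzz * (b * d)
  have hvv : star v * v = p := by
    rw [hsv, key _ _ _ _ (mul_mem hp hsw) hp]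
    have : z * (p * star w * (w * p)) = z * p := by
      calc z * (p * star w * (w * p)) = p * (z * (star w * (w * p))) := by
            rw [← mul_assoc p z, ← czp]; noncomm_ring
        _ = z * p := by rw [h1', ← mul_assoc, ← czp, mul_assoc, hpp]
    rw [this, hpp]; noncomm_ring
  have hvs : v * star v = z * (w * p * star w) + (1 - z) * p := by
    rw [hsv, key _ _ _ _ (mul_mem hw hp) hp, hpp]
    congr 2
    rw [mul_assoc, ← mul_assoc p p, hpp, mul_assoc]
  have hvp : v * p = v := by
    simp only [v, add_mul, mul_assoc, hpp]
  have hq : V.IsProjIn (v * star v) := by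
    refine ⟨mul_mem hv (star_mem hv), by simp, ?_⟩
    rw [mul_assoc, ← mul_assoc (star v), hvv, ← mul_assoc, hvp]
  have hqp : v * star v * p = v * star v := by
    rw [hvs, add_mul]
    simp only [mul_assoc, hpp, hwp2]
  have hqe : v * star v = p :=
    hfin _ hq hqp ⟨star v, star_mem hv, by simp, by simpa using hvv⟩
  have h3 : z * (w * p * star w) = z * p := by
    rw [hvs] at hqe
    linear_combination (norm := noncomm_ring) hqe
  -- multiply `h3` by `w w*` on the left
  have h4 : z * (w * star w) = z * p := by
    calc z * (w * star w) = w * star w * (z * p) := by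
          rw [← mul_assoc (w * star w), ← hzc _ (mul_mem hw hsw), mul_assoc, hwp]
      _ = z * (w * star w * w * p * star w) := by
          rw [← h3, ← mul_assoc, ← hzc _ (mul_mem hw hsw)]; noncomm_ring
      _ = z * p := by rw [htri, h3]
  have h5 : p - w * star w = z * (p - w * star w) := by
    rw [hzc _ (sub_mem hp (mul_mem hw hsw)), h2]
  rw [mul_sub, h4, sub_self] at h5
  exact (sub_eq_zero.1 h5).symm

/-! ### Polar decomposition with a maximal extension -/

lemma norm_sq_apply (a : H →L[ℂ] H) (x : H) :
    inner ℂ ((star a * a) x) x = (‖a x‖ : ℂ) ^ 2 := by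
  rw [ContinuousLinearMap.star_eq_adjoint]
  simp only [mul_apply_eq_comp, ContinuousLinearMap.adjoint_inner_left]
  exact inner_self_eq_norm_sq_to_K (𝕜 := ℂ) (a x)

lemma star_mul_self_eq_iff (a b : H →L[ℂ] H) :
    star a * a = star b * b ↔ ∀ x, ‖a x‖ = ‖b x‖ := by
  refine ⟨fun h x => ?_, fun h => ContinuousLinearMap.ext fun x => ?_⟩
  · have h1 := norm_sq_apply a x
    rw [h, norm_sq_apply b x] at h1
    norm_cast at h1
    exact ((pow_left_inj₀ (norm_nonneg _) (norm_nonneg _) two_ne_zero).1 h1).symm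
  · refine DFunLike.congr_fun ((ext_inner_map _ _).1 fun x => ?_) x
    exact (norm_sq_apply a x).trans ((h x) ▸ (norm_sq_apply b x).symm)

/-- The absolute value `k = (t* t)^(1/2)` belongs to `V`, and `‖k x‖ = ‖t x‖` for all `x`. -/
lemma exists_abs (V : VonNeumannAlgebra H) {t : H →L[ℂ] H} (ht : t ∈ V) :
    ∃ k ∈ V, 0 ≤ k ∧ star k = k ∧ k * k = star t * t ∧ ∀ x, ‖k x‖ = ‖t x‖ := by
  have h0 : 0 ≤ star t * t := star_mul_self_nonneg t
  have hk := CFC.sqrt_mul_sqrt_self (star t * t) h0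
  have hk0 : 0 ≤ CFC.sqrt (star t * t) := CFC.sqrt_nonneg _
  have hks : star (CFC.sqrt (star t * t)) = CFC.sqrt (star t * t) := hk0.isSelfAdjoint
  refine ⟨CFC.sqrt (star t * t), vn_sqrt_mem V (mul_mem (star_mem ht) ht), hk0, hks, hk, ?_⟩
  exact (star_mul_self_eq_iff _ _).1 (by rw [hks, hk])

/-- Graphs of partial isometries of the corner `pVp`, possibly with a non-closed domain: the
subspaces `G` of `pH × pH` that are invariant under the commutant of `V` and on which the two
coordinates have the same norm. -/
def isoGraphs (V : VonNeumannAlgebra H) (p : H →L[ℂ] H) : Set (Submodule ℂ (H × H)) :=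
  {G | ∀ g ∈ G, ‖g.1‖ = ‖g.2‖ ∧ p g.1 = g.1 ∧ p g.2 = g.2 ∧ ∀ y ∈ V.commutant, (y g.1, y g.2) ∈ G}

lemma isoGraphs_closure {V : VonNeumannAlgebra H} {p : H →L[ℂ] H} {G : Submodule ℂ (H × H)}
    (hG : G ∈ isoGraphs V p) : G.topologicalClosure ∈ isoGraphs V p := by
  intro g hg
  have hg' : g ∈ closure (G : Set (H × H)) := hg
  refine ⟨?_, ?_, ?_, ?_⟩
  · exact closure_minimal (s := (G : Set (H × H))) (t := {g | ‖g.1‖ = ‖g.2‖})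
      (fun g hg => (hG g hg).1) (isClosed_eq (by fun_prop) (by fun_prop)) hg'
  · exact closure_minimal (s := (G : Set (H × H))) (t := {g | p g.1 = g.1})
      (fun g hg => (hG g hg).2.1) (isClosed_eq (by fun_prop) (by fun_prop)) hg'
  · exact closure_minimal (s := (G : Set (H × H))) (t := {g | p g.2 = g.2})
      (fun g hg => (hG g hg).2.2.1) (isClosed_eq (by fun_prop) (by fun_prop)) hg'
  · intro y hy
    have hc : Continuous fun g : H × H => (y g.1, y g.2) := by fun_prop
    exact map_mem_closure (f := fun g : H × H => (y g.1, y g.2)) hc hg' fun g hg => (hG g hg).2.2.2 y hy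

lemma exists_maximal_isoGraph (V : VonNeumannAlgebra H) (p : H →L[ℂ] H) {G₀ : Submodule ℂ (H × H)}
    (h₀ : G₀ ∈ isoGraphs V p) :
    ∃ G, G₀ ≤ G ∧ IsClosed (G : Set (H × H)) ∧ Maximal (· ∈ isoGraphs V p) G := by
  obtain ⟨G, hle, hmax⟩ := zorn_le_nonempty₀ (isoGraphs V p) (fun c hc hchain G₁ hG₁ => by
    refine ⟨sSup c, ?_, fun z hz => le_sSup hz⟩
    intro g hg
    rw [Submodule.mem_sSup_of_directed ⟨G₁, hG₁⟩ hchain.directedOn] at hg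
    obtain ⟨G', hG', hg⟩ := hg
    obtain ⟨h1, h2, h3, h4⟩ := hc hG' g hg
    exact ⟨h1, h2, h3, fun y hy => le_sSup hG' (h4 y hy)⟩) G₀ h₀
  refine ⟨G, hle, ?_, hmax⟩
  have := hmax.2 (isoGraphs_closure hmax.1) G.le_topologicalClosure
  have h : G.topologicalClosure = G := le_antisymm this G.le_topologicalClosure
  rw [← h]
  exact G.isClosed_topologicalClosure

/-- A closed graph in `isoGraphs V p` is the graph of the restriction of a partial isometry
`w ∈ pVp` to its initial space. -/
lemma exists_partialIsometry_of_graph (V : VonNeumannAlgebra H) {p : H →L[ℂ] H} (hps : star p = p)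
    {G : Submodule ℂ (H × H)} (hG : G ∈ isoGraphs V p) (hcl : IsClosed (G : Set (H × H))) :
    ∃ w ∈ V, w * star w * w = w ∧ p * w = w ∧ w * p = w ∧ (∀ g ∈ G, w g.1 = g.2) ∧
      ∀ g ∈ G, (star w * w) g.1 = g.1 := by
  have : CompleteSpace G := hcl.completeSpace_coe
  let φ₁ : G →ₗᵢ[ℂ] H :=
    ⟨(LinearMap.fst ℂ H H).comp G.subtype, fun g => by
      have := (hG g g.2).1
      change ‖(g : H × H).1‖ = ‖(g : H × H)‖
      rw [Prod.norm_def, ← this, max_self]⟩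
  let φ₂ : G →ₗᵢ[ℂ] H :=
    ⟨(LinearMap.snd ℂ H H).comp G.subtype, fun g => by
      have := (hG g g.2).1
      change ‖(g : H × H).2‖ = ‖(g : H × H)‖
      rw [Prod.norm_def, this, max_self]⟩
  let X := LinearMap.range φ₁.toLinearMap
  have hXc : CompleteSpace X := by
    have : IsComplete (Set.range φ₁) := φ₁.isometry.isUniformInducing.isComplete_range
    exact this.completeSpace_coe
  let P := X.starProjection
  let w : H →L[ℂ] H := φ₂.toContinuousLinearMap ∘L
    (φ₁.equivRange.symm.toContinuousLinearEquiv : X →L[ℂ] G) ∘L X.orthogonalProjectionOnto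
  have hex : ∀ x, ∃ g ∈ G, P x = g.1 ∧ w x = g.2 := by
    intro x
    refine ⟨φ₁.equivRange.symm (X.orthogonalProjectionOnto x), Subtype.coe_prop _, ?_, rfl⟩
    exact congrArg Subtype.val
      (φ₁.equivRange.apply_symm_apply (X.orthogonalProjectionOnto x)).symm
  have hwg : ∀ g ∈ G, w g.1 = g.2 := by
    intro g hg
    have h1 : g.1 ∈ X := ⟨⟨g, hg⟩, rfl⟩
    obtain ⟨g', hg', h2, h3⟩ := hex g.1
    rw [Submodule.starProjection_eq_self_iff.2 h1] at h2
    have h4 := (hG _ (sub_mem hg hg')).1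
    simp only [Prod.fst_sub, Prod.snd_sub, h2, sub_self, norm_zero] at h4
    rw [h3]
    exact (sub_eq_zero.1 (norm_eq_zero.1 h4.symm)).symm
  have hPg : ∀ g ∈ G, P g.1 = g.1 := fun g hg =>
    Submodule.starProjection_eq_self_iff.2 ⟨⟨g, hg⟩, rfl⟩
  have hsp : IsStarProjection P := isStarProjection_starProjection
  have hs : star P = P := hsp.isSelfAdjoint
  have hi : P * P = P := hsp.isIdempotentElem
  have hww : star w * w = P := by
    rw [(star_mul_self_eq_iff w P).2, hs, hi]
    intro x
    obtain ⟨g, hg, h1, h2⟩ := hex x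
    rw [h1, h2, (hG g hg).1]
  have hPV : P ∈ V := by
    rw [VonNeumannAlgebra.IsStarProjection.mem_iff hsp]
    rintro y hy v hv
    simp only [Submodule.mem_comap, P, Submodule.range_starProjection] at hv ⊢
    obtain ⟨g, rfl⟩ := hv
    exact ⟨⟨_, (hG g g.2).2.2.2 y hy⟩, rfl⟩
  have hwP : w * P = w := by
    ext x
    obtain ⟨g, hg, h1, h2⟩ := hex x
    simp [h1, h2, hwg g hg]
  have hpP : p * P = P := by
    ext x
    obtain ⟨g, hg, h1, h2⟩ := hex x
    simp [h1, (hG g hg).2.1]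
  have hPp : P * p = P := by simpa [hs, hps] using congrArg star hpP
  refine ⟨w, ?_, by rw [mul_assoc, hww, hwP], ?_, by rw [← hwP, mul_assoc, hPp], hwg,
    fun g hg => by rw [hww, hPg g hg]⟩
  · rw [vn_mem_iff]
    intro y hy
    have hc : y * P = P * y := ((vn_mem_iff V P).1 hPV y hy)
    ext x
    obtain ⟨g, hg, h1, h2⟩ := hex x
    have h3 : w (y x) = w ((P * y) x) := by
      change _ = (w * P) (y x)
      rw [hwP]
    change y (w x) = w (y x)
    rw [h3, ← hc]
    change _ = w (y (P x))
    rw [h1, h2, hwg _ ((hG g hg).2.2.2 y hy)]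
  · ext x
    obtain ⟨g, hg, h1, h2⟩ := hex x
    simp [h2, (hG g hg).2.2.1]

/-- Polar decomposition with a maximal extension: if `‖h x‖ = ‖b x‖` for all `x`, the isometry
`h x ↦ b x` extends to a partial isometry `w ∈ pVp` such that the complements in `p` of the final
and initial projections of `w` have no nonzero intertwiner in `V`. -/
lemma exists_maximal_partialIsometry (V : VonNeumannAlgebra H) {p : H →L[ℂ] H}
    (hp : p ∈ V) (hps : star p = p) (hpp : p * p = p)
    {h b : H →L[ℂ] H} (hh : h ∈ V) (hb : b ∈ V) (hph : p * h = h) (hpb : p * b = b)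
    (hn : ∀ x, ‖h x‖ = ‖b x‖) :
    ∃ w ∈ V, w * star w * w = w ∧ p * w = w ∧ w * p = w ∧ w * h = b ∧
      ∀ x ∈ V, (p - w * star w) * x * (p - star w * w) = 0 := by
  have graph : ∀ k ∈ V, ∀ t ∈ V, p * k = k → p * t = t → (∀ x, ‖k x‖ = ‖t x‖) →
      LinearMap.range (k.prod t).toLinearMap ∈ isoGraphs V p := by
    rintro k hk t ht hpk hpt hkt _ ⟨x, rfl⟩
    refine ⟨hkt x, DFunLike.congr_fun hpk x, DFunLike.congr_fun hpt x, fun y hy => ⟨y x, ?_⟩⟩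
    exact Prod.ext (DFunLike.congr_fun ((vn_mem_iff V k).1 hk y hy).symm x)
      (DFunLike.congr_fun ((vn_mem_iff V t).1 ht y hy).symm x)
  obtain ⟨G, hle, hcl, hmax⟩ := exists_maximal_isoGraph V p (graph h hh b hb hph hpb hn)
  obtain ⟨w, hw, htri, hpw, hwp, hwg, hPg⟩ :=
    exists_partialIsometry_of_graph V hps hmax.1 hcl
  have hsw := star_mem hw
  refine ⟨w, hw, htri, hpw, hwp, ?_, ?_⟩
  · ext x
    exact hwg _ (hle ⟨x, rfl⟩)
  intro x hx
  set t := (p - w * star w) * x * (p - star w * w) with ht_def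
  have ht : t ∈ V := mul_mem (mul_mem (sub_mem hp (mul_mem hw hsw)) hx)
    (sub_mem hp (mul_mem hsw hw))
  obtain ⟨k, hk, -, hks, -, hkt⟩ := exists_abs V ht
  have htri' : star w * w * star w = star w := by simpa [mul_assoc] using congrArg star htri
  have hpsw : p * star w = star w := by simpa [hps] using congrArg star hwp
  have htP : t * (star w * w) = 0 := by
    have : (p - star w * w) * (star w * w) = 0 := by
      rw [sub_mul, ← mul_assoc, hpsw, ← mul_assoc, htri', sub_self]
    rw [ht_def, mul_assoc, this, mul_zero]
  have hQt : star w * t = 0 := by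
    have : star w * (p - w * star w) = 0 := by
      have : star w * p = star w := by simpa [hps] using congrArg star hpw
      rw [mul_sub, this, ← mul_assoc, htri', sub_self]
    rw [ht_def, ← mul_assoc, ← mul_assoc, this, zero_mul, zero_mul]
  have htp : t * p = t := by
    rw [ht_def, mul_assoc, sub_mul p _ p, hpp, mul_assoc (star w), hwp]
  have hpt : p * t = t := by
    rw [ht_def, ← mul_assoc, ← mul_assoc, mul_sub p p, hpp, ← mul_assoc p w, hpw]
  -- `k = |t|` has the same right annihilator as `t`
  have hkann : ∀ a : H →L[ℂ] H, t * a = 0 → k * a = 0 := by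
    intro a ha
    ext v
    have : t (a v) = 0 := DFunLike.congr_fun ha v
    have h2 := hkt (a v)
    rw [this, norm_zero, norm_eq_zero] at h2
    exact h2
  have hpk : p * k = k := by
    have := hkann (1 - p) (by rw [mul_sub, htp, mul_one, sub_self])
    rw [mul_sub, mul_one, sub_eq_zero] at this
    simpa [hps, hks] using congrArg star this.symm
  have hPk : star w * w * k = 0 := by
    simpa [hks] using congrArg star (hkann _ htP)
  have hwk : w * k = 0 := by
    rw [← htri, mul_assoc w, mul_assoc w, hPk, mul_zero]
  -- the graph of `k v ↦ t v` is orthogonal to `G` in both coordinates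
  have hsup : G ⊔ LinearMap.range (k.prod t).toLinearMap ∈ isoGraphs V p := by
    intro g' hg'
    obtain ⟨g, hg, r, hr, rfl⟩ := Submodule.mem_sup.1 hg'
    obtain ⟨g1, g2, g3, g4⟩ := hmax.1 g hg
    obtain ⟨r1, r2, r3, r4⟩ := graph k hk t ht hpk hpt hkt r hr
    refine ⟨?_, by simp [g2, r2], by simp [g3, r3], fun y hy => ?_⟩
    · obtain ⟨v, rfl⟩ := hr
      have o1 : inner ℂ g.1 (k v) = 0 := by
        rw [← hPg g hg, ← ContinuousLinearMap.adjoint_inner_right,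
          ← ContinuousLinearMap.star_eq_adjoint]
        have : star (star w * w) (k v) = (star w * w * k) v := by simp
        rw [this, hPk]
        simp
      have o2 : inner ℂ g.2 (t v) = 0 := by
        rw [← hwg g hg, ← ContinuousLinearMap.adjoint_inner_right,
          ← ContinuousLinearMap.star_eq_adjoint]
        change inner ℂ g.1 ((star w * t) v) = 0
        rw [hQt]
        simp
      have e1 := norm_add_sq_eq_norm_sq_add_norm_sq_of_inner_eq_zero _ _ o1
      have e2 := norm_add_sq_eq_norm_sq_add_norm_sq_of_inner_eq_zero _ _ o2
      change ‖g.1 + k v‖ = ‖g.2 + t v‖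
      have := hkt v
      rw [g1, this, ← e2] at e1
      exact (mul_self_inj (norm_nonneg _) (norm_nonneg _)).1 e1
    · have := Submodule.add_mem_sup (g4 y hy) (r4 y hy)
      simpa using this
  have hGle := hmax.2 hsup le_sup_left
  ext v
  have hv : ((k v, t v) : H × H) ∈ G := hGle (Submodule.mem_sup_right ⟨v, rfl⟩)
  refine (hwg _ hv).symm.trans ?_
  exact DFunLike.congr_fun hwk v

/-! ### Finite corners have stable range one -/

/-- In the corner of a finite projection the partial isometry of the polar decomposition extends
to a unitary of the corner: `a = |a*| y`. -/
lemma exists_unitary_polar (V : VonNeumannAlgebra H) {p : H →L[ℂ] H} (hfin : V.FiniteProj p)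
    {a : H →L[ℂ] H} (ha : a ∈ V) (hpa : p * a = a) (hap : a * p = a) :
    ∃ h ∈ V, ∃ y ∈ V, 0 ≤ h ∧ h * h = a * star a ∧ p * h = h ∧ h * p = h ∧ h * y = a ∧
      p * y = y ∧ y * star y = p ∧ star y * y = p := by
  obtain ⟨hp, hps, hpp⟩ := hfin.1
  obtain ⟨h, hh, h0, hhs, hha, hn⟩ := exists_abs V (star_mem ha)
  rw [star_star] at hha
  have hpsa : p * star a = star a := by simpa [hps] using congrArg star hap
  have hsap : star a * p = star a := by simpa [hps] using congrArg star hpa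
  have hhp : h * p = h := by
    ext x
    have h1 := hn ((1 - p) x)
    have h2 : star a ((1 - p) x) = (star a * (1 - p)) x := rfl
    rw [h2, mul_sub, hsap, mul_one, sub_self] at h1
    simp only [zero_apply, norm_zero, norm_eq_zero,
      sub_apply, map_sub] at h1
    exact (sub_eq_zero.1 h1).symm
  have hph : p * h = h := by simpa [hps, hhs] using congrArg star hhp
  obtain ⟨w, hw, htri, hpw, hwp, hwh, hmax⟩ :=
    exists_maximal_partialIsometry V hp hps hpp hh (star_mem ha) hph hpsa hn
  have hswp : star w * p = star w := by simpa [hps] using congrArg star hpw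
  have hpsw : p * star w = star w := by simpa [hps] using congrArg star hwp
  have hww : w * star w = p := by
    refine eq_of_finite V hfin hw (by rw [mul_assoc, hswp]) htri fun x hx => ?_
    rw [sub_mul 1, one_mul, mul_assoc (star w), hwp]
    exact hmax x hx
  have hww' : star w * w = p := by
    refine hfin.2 _ ⟨mul_mem (star_mem hw) hw, by simp, ?_⟩ (by rw [mul_assoc, hwp])
      ⟨w, hw, rfl, hww⟩
    rw [mul_assoc, ← mul_assoc w, htri]
  refine ⟨h, hh, star w, star_mem hw, h0, hha, hph, hhp, ?_, hpsw, ?_, ?_⟩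
  · simpa [hhs] using congrArg star hwh
  · rw [star_star, hww']
  · rw [star_star, hww]

lemma vn_inv_mem (V : VonNeumannAlgebra H) {m n : H →L[ℂ] H} (hm : m ∈ V) (hmn : m * n = 1)
    (hnm : n * m = 1) : n ∈ V := by
  rw [vn_mem_iff] at hm ⊢
  intro y hy
  calc y * n = n * (m * y) * n := by rw [← mul_assoc n, hnm, one_mul]
    _ = n * y := by rw [← hm y hy, mul_assoc, mul_assoc, hmn, mul_one]

/-- If `0 ≤ h ≤ 1` then `h + 1 - h² ≥ 1` is invertible. -/
lemma isUnit_aux {h : H →L[ℂ] H} (h0 : 0 ≤ h) (h1 : ‖h‖ ≤ 1) : IsUnit (h + (1 - h * h)) := by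
  have hle : h ≤ 1 := (CStarAlgebra.norm_le_one_iff_of_nonneg h h0).1 h1
  set r := CFC.sqrt h with hr
  have hr0 : 0 ≤ r := CFC.sqrt_nonneg _
  have hrr : r * r = h := CFC.sqrt_mul_sqrt_self h h0
  have h2 : 0 ≤ r * (1 - h) * r := conjugate_nonneg_of_nonneg (sub_nonneg.2 hle) hr0
  have h3 : r * (1 - h) * r = h - h * h := by
    rw [← hrr]; noncomm_ring
  have h4 : (1 : H →L[ℂ] H) ≤ h + (1 - h * h) := by
    rw [← sub_nonneg]
    rw [h3] at h2
    convert h2 using 1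
    noncomm_ring
  exact CStarAlgebra.isUnit_of_le 1 h4

/-- Stable range one for a finite corner: with `a = u p`, the element `a + (p - a a*) y` is
invertible in `pVp` for a suitable unitary `y` of `pVp`. -/
lemma exists_stable_range (V : VonNeumannAlgebra H) {p u : H →L[ℂ] H} (hfin : V.FiniteProj p)
    (hu : u ∈ V) (huu : u * star u = p) (hpu : p * u = u) :
    ∃ y ∈ V, ∃ s' ∈ V, p * y = y ∧ y * p = y ∧
      (u * p + u * (1 - p) * star u * y) * s' = p ∧
      s' * (u * p + u * (1 - p) * star u * y) = p := by
  obtain ⟨hp, hps, hpp⟩ := hfin.1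
  obtain ⟨h, hh, y, hy, h0, hha, hph, hhp, hhy, hpy, hyy, hyy'⟩ :=
    exists_unitary_polar V hfin (mul_mem hu hp) (by rw [← mul_assoc, hpu])
      (by rw [mul_assoc, hpp])
  have hyp : y * p = y := by rw [← hyy', ← mul_assoc, hyy, hpy]
  have hha' : h * h = u * p * star u := by
    rw [hha, star_mul, hps, ← mul_assoc, mul_assoc u, hpp]
  have hnp : ‖p‖ ≤ 1 := by
    have := CStarRing.norm_star_mul_self (x := p)
    rw [hps, hpp] at this
    nlinarith [norm_nonneg p]
  have hnu : ‖u‖ ≤ 1 := by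
    have := CStarRing.norm_self_mul_star (x := u)
    rw [huu] at this
    nlinarith [norm_nonneg u]
  have hnh : ‖h‖ ≤ 1 := by
    have h1 := CStarRing.norm_self_mul_star (x := h)
    rw [(IsSelfAdjoint.of_nonneg h0).star_eq, hha'] at h1
    have h2 : ‖u * p * star u‖ ≤ 1 := by
      calc ‖u * p * star u‖ ≤ ‖u * p‖ * ‖star u‖ := norm_mul_le _ _
        _ ≤ (‖u‖ * ‖p‖) * ‖star u‖ := by gcongr; exact norm_mul_le _ _
        _ ≤ (1 * 1) * 1 := by rw [norm_star]; gcongr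
        _ = 1 := by norm_num
    nlinarith [norm_nonneg h]
  obtain ⟨⟨m, n, hmn, hnm⟩, rfl : m = _⟩ := isUnit_aux h0 hnh
  set m := h + (1 - h * h) with hm_def
  have hm : m ∈ V := add_mem hh (sub_mem (one_mem V) (mul_mem hh hh))
  have hn : n ∈ V := vn_inv_mem V hm hmn hnm
  have hs : u * p + u * (1 - p) * star u * y = m * y := by
    have e1 : u * p = h * y := hhy.symm
    have e2 : u * (1 - p) * star u * y = y - h * h * y := by
      rw [mul_sub, mul_one, sub_mul, huu, sub_mul, hpy, ← hha']
    rw [e2, e1, hm_def]; noncomm_ring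
  have hmp : m * p = p * m := by
    simp only [hm_def, mul_add, add_mul, mul_sub, sub_mul, hph, hhp, mul_assoc, mul_one, one_mul]
    rw [← mul_assoc p h, hph]
  refine ⟨y, hy, star y * n, mul_mem (star_mem hy) hn, hpy, hyp, ?_, ?_⟩
  · rw [hs]
    calc m * y * (star y * n) = m * (y * star y) * n := by noncomm_ring
      _ = p := by rw [hyy, hmp, mul_assoc, hmn, mul_one]
  · rw [hs]
    calc star y * n * (m * y) = star y * (n * m) * y := by noncomm_ring
      _ = p := by rw [hnm, mul_one, hyy']

/-! ### Cancellation of a finite projection -/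

/-- Cancellation of a finite projection: if `u u* = p` is finite then some `T`, `S ∈ V` are
mutually inverse between the ranges of `1 - u*u` and `1 - p`. Both ranges are complements of the
range of the idempotent `k = p + (1 - p) u* y`, and `T`, `S` are the projections along it. -/
lemma exists_complement_iso (V : VonNeumannAlgebra H) {p u : H →L[ℂ] H} (hfin : V.FiniteProj p)
    (hu : u ∈ V) (huu : u * star u = p) (hpu : p * u = u) :
    ∃ T ∈ V, ∃ S ∈ V, T * S = 1 - p ∧ S * T = 1 - star u * u ∧ p * T = 0 ∧ T * star u = 0 ∧
      u * S = 0 ∧ S * u = 0 := by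
  obtain ⟨hp, hps, hpp⟩ := hfin.1
  have hsu := star_mem hu
  have hsup : star u * p = star u := by simpa [hps] using congrArg star hpu
  obtain ⟨y, hy, s', hs', hpy, hyp, hss', hs's⟩ := exists_stable_range V hfin hu huu hpu
  set k := p + (1 - p) * star u * y with hk_def
  have hk : k ∈ V := add_mem hp (mul_mem (mul_mem (sub_mem (one_mem V) hp) hsu) hy)
  have huk : u * k = u * p + u * (1 - p) * star u * y := by rw [hk_def]; noncomm_ring
  rw [← huk] at hss' hs's
  have hpk : p * k = p := by
    have : p * (1 - p) = 0 := by rw [mul_sub, hpp, mul_one, sub_self]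
    rw [hk_def, mul_add, hpp, ← mul_assoc, ← mul_assoc, this, zero_mul, zero_mul, add_zero]
  have hkp : k * p = k := by rw [hk_def, add_mul, hpp, mul_assoc _ y, hyp]
  have hkk : k * k = k := by
    calc k * k = k * (p * k) := by rw [← mul_assoc, hkp]
      _ = k := by rw [hpk, hkp]
  set f := star u * u with hf_def
  have huf : u * f = u := by rw [hf_def, ← mul_assoc, huu, hpu]
  have hfu : f * star u = star u := by rw [hf_def, mul_assoc, huu, hsup]
  -- the idempotent with the same range as `k` whose kernel is the range of `1 - u*u`
  set E := k * s' * u with hE_def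
  have hE : E ∈ V := mul_mem (mul_mem hk hs') hu
  have hkE : k * E = E := by rw [hE_def, ← mul_assoc, ← mul_assoc, hkk]
  have hEk : E * k = k := by rw [hE_def, mul_assoc, mul_assoc, hs's, hkp]
  have huE : u * E = u := by rw [hE_def, ← mul_assoc, ← mul_assoc, hss', hpu]
  have hEf : E * f = E := by rw [hE_def, mul_assoc, huf]
  have hfE : f * E = f := by rw [hf_def, mul_assoc, huE]
  have h1f : 1 - f ∈ V := sub_mem (one_mem V) (mul_mem hsu hu)
  have h1p : 1 - p ∈ V := sub_mem (one_mem V) hp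
  refine ⟨(1 - k) * (1 - f), mul_mem (sub_mem (one_mem V) hk) h1f,
    (1 - E) * (1 - p), mul_mem (sub_mem (one_mem V) hE) h1p, ?_, ?_, ?_, ?_, ?_, ?_⟩
  · have e1 : (1 - f) * (1 - E) = 1 - E := by linear_combination (norm := noncomm_ring) hfE
    have e2 : (1 - k) * (1 - E) = 1 - k := by linear_combination (norm := noncomm_ring) hkE
    have e3 : (1 - k) * (1 - p) = 1 - p := by linear_combination (norm := noncomm_ring) hkp
    rw [mul_assoc, ← mul_assoc (1 - f), e1, ← mul_assoc, e2, e3]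
  · have e1 : (1 - p) * (1 - k) = 1 - k := by linear_combination (norm := noncomm_ring) hpk
    have e2 : (1 - E) * (1 - k) = 1 - E := by linear_combination (norm := noncomm_ring) hEk
    have e3 : (1 - E) * (1 - f) = 1 - f := by linear_combination (norm := noncomm_ring) hEf
    rw [mul_assoc, ← mul_assoc (1 - p), e1, ← mul_assoc, e2, e3]
  · rw [← mul_assoc, mul_sub p, hpk, mul_one, sub_self, zero_mul]
  · rw [mul_assoc, sub_mul 1 f, hfu, one_mul, sub_self, mul_zero]
  · rw [← mul_assoc, mul_sub u, huE, mul_one, sub_self, zero_mul]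
  · rw [mul_assoc, sub_mul 1 p, hpu, one_mul, sub_self, mul_zero]

/-! ### Unitaries extending a partial isometry -/

/-- If an invertible `G ∈ V` agrees with the partial isometry `u` on the initial space of `u` and
`G* u = u* u`, then the unitary part `G |G|⁻¹` of `G` still extends `u`. -/
lemma exists_unitary_of_invertible (V : VonNeumannAlgebra H) {u G G' : H →L[ℂ] H}
    (hG : G ∈ V) (hG' : G' ∈ V) (h1 : G * G' = 1) (h2 : G' * G = 1)
    (hGf : G * (star u * u) = u) (hGu : star G * u = star u * u) :
    ∃ w ∈ V, star w * w = 1 ∧ w * star w = 1 ∧ w * (star u * u) = u := by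
  set f := star u * u with hf_def
  obtain ⟨R, hR, hR0, hRs, hRR, -⟩ := exists_abs V (star_mem hG')
  rw [star_star] at hRR
  have h1s : star G' * star G = 1 := by simpa using congrArg star h1
  have h2s : star G * star G' = 1 := by simpa using congrArg star h2
  have hD1 : R * R * (star G * G) = 1 := by
    calc R * R * (star G * G) = G' * (star G' * star G) * G := by rw [hRR]; noncomm_ring
      _ = 1 := by rw [h1s, mul_one, h2]
  have hD2 : star G * G * (R * R) = 1 := by
    calc star G * G * (R * R) = star G * (G * G') * star G' := by rw [hRR]; noncomm_ring
      _ = 1 := by rw [h1, mul_one, h2s]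
  have hcomm : R * (star G * G) = star G * G * R := by
    calc R * (star G * G) = star G * G * (R * R) * R * (star G * G) := by rw [hD2, one_mul]
      _ = star G * G * R * (R * R * (star G * G)) := by noncomm_ring
      _ = star G * G * R := by rw [hD1, mul_one]
  have hRRf : R * R * f = f := by
    have : star G * G * f = f := by rw [mul_assoc, hGf, hGu]
    calc R * R * f = R * R * (star G * G * f) := by rw [this]
      _ = f := by rw [← mul_assoc, hD1, one_mul]
  -- `R + 1` is invertible and `(R + 1) (R f - f) = 0`
  have hRf : R * f = f := by
    have hle : (1 : H →L[ℂ] H) ≤ R + 1 := le_add_of_nonneg_left hR0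
    have hunit : IsUnit (R + 1) := CStarAlgebra.isUnit_of_le 1 hle
    have : (R + 1) * (R * f - f) = 0 := by
      linear_combination (norm := noncomm_ring) hRRf
    exact sub_eq_zero.1 (hunit.mul_right_eq_zero.1 this)
  refine ⟨G * R, mul_mem hG hR, ?_, ?_, ?_⟩
  · calc star (G * R) * (G * R) = R * (star G * G) * R := by
          rw [star_mul, hRs]; noncomm_ring
      _ = 1 := by rw [hcomm, mul_assoc, hD2]
  · calc G * R * star (G * R) = G * (R * R) * star G := by
          rw [star_mul, hRs]; noncomm_ring
      _ = G * G' * (star G' * star G) := by rw [hRR]; noncomm_ring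
      _ = 1 := by rw [h1, h1s, one_mul]
  · rw [mul_assoc, hRf, hGf]

/-- let `p ∈ V` be a finite, σ-finite projection with `p ≠ 1` and let
`u ∈ V` be a partial isometry with `uu* ≤ p` which is a complete tripotent in `pV`, i.e.
`(p − uu*)·x·(1 − u*u) = 0` for every `x ∈ V`. Then `uu* = p` and `u` extends to a unitary:
there is `ũ ∈ V` with `ũ*ũ = ũũ* = 1` and `ũ·(u*u) = u`. -/
theorem stmt17 (V : VonNeumannAlgebra H) (p : H →L[ℂ] H)
    (hp : V.IsProjIn p) (hfin : V.FiniteProj p) (hsig : V.SigmaFiniteProj p) (hne : p ≠ 1)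
    (u : H →L[ℂ] H) (hu : u ∈ V) (htri : u * star u * u = u)
    (hle : (u * star u) * p = u * star u)
    (hcomp : ∀ x ∈ V, (p - u * star u) * x * (1 - star u * u) = 0) :
    u * star u = p ∧
    ∃ w ∈ V, star w * w = 1 ∧ w * star w = 1 ∧ w * (star u * u) = u := by
  have hpu : p * u = u := by
    have hpe : p * (u * star u) = u * star u := by simpa [hp.2.1] using congrArg star hle
    calc p * u = p * (u * star u) * u := by rw [mul_assoc, htri]
      _ = u := by rw [hpe, htri]
  have huu : u * star u = p := by
    refine eq_of_finite V hfin hu hle htri fun x hx => ?_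
    rw [← mul_assoc, hcomp x hx, zero_mul]
  refine ⟨huu, ?_⟩
  obtain ⟨T, hT, S, hS, hTS, hST, hpT, hTu, huS, hSu⟩ := exists_complement_iso V hfin hu huu hpu
  have huT : star u * T = 0 := by
    have : star u * p = star u := by simpa [hp.2.1] using congrArg star hpu
    rw [← this, mul_assoc, hpT, mul_zero]
  have hTu' : star T * u = 0 := by simpa using congrArg star huT
  refine exists_unitary_of_invertible V (add_mem hT hu) (add_mem hS (star_mem hu)) ?_ ?_ ?_ ?_
  · simp only [add_mul, mul_add, hTS, hTu, huS, huu]; abel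
  · simp only [add_mul, mul_add, hST, hSu, huT]; abel
  · rw [add_mul, ← mul_assoc, hTu, zero_mul, zero_add, ← mul_assoc, htri]
  · rw [star_add, add_mul, hTu', zero_add]
end
end
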